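/- arXiv:1808.06557 — 2 statements merged into one kernel-verified Lean document; each statement's English description precedes it below -/
import Mathlib

section
/- (Zhang–Zhang; Miyazaki) Let k and n be positive integers with n > 1. Then the only solution in positive integers (x,y,z) of the equation ((4^k − 1)·n)^x + (2^{k+1}·n)^y = ((4^k + 1)·n)^z is (x,y,z) = (2,2,2). -/
/-!
Write `a = 4 ^ k - 1`, `b = 2 ^ (k + 1)`, `c = 4 ^ k + 1`, so that `a ^ 2 + b ^ 2 = c ^ 2`, and
suppose `(a n) ^ x + (b n) ^ y = (c n) ^ z` with `n > 1`. The argument is elementary and splits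
according to the position of `z` relative to `x` and `y`.

* `x, y ≤ z`. Comparison with `(a n) ^ 2 + (b n) ^ 2 = (c n) ^ 2` leaves only `x = y = z = 2`
  (`case_big`).

* `z < x, y`. Dividing by `n ^ z`, the number `c ^ z` is a product of `n ^ i`, where
  `i = min x y - z`, and a cofactor greater than `a ^ z`. If `x ≠ y` the two factors are coprime,
  so the cofactor is `d ^ z` with `d` a divisor of `c` greater than `a = c - 2`; this forces
  `d = c` and `n = 1`. If `x = y`, every prime factor of `a ^ x + b ^ x` divides `c`; this is
  impossible unless `x = 2 m` with `m` odd, and then lifting the exponent gives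
  `a ^ x + b ^ x ∣ c ^ 2 m`, so that `m = 1` by size; then `n c ^ 2 = c`, which is absurd
  (`caseA_eq`).

* `y ≤ z < x`. If `y < z` then `n` is a power of two, the power of two cancels, and
  `a ^ x N + 1 = c ^ z`; if `y = z` then `a ^ x N + b ^ z = c ^ z`. As `c ≡ 2` modulo `a`, the
  order of `2` modulo `a = 2 ^ (2 k) - 1` shows that `z` is even and that the equation reads
  `a ^ x N = (c ^ w - v) (c ^ w + v)`. The whole of `(2 ^ k + 1) ^ x` divides one of the two
  factors, both of which are at most `(c + b) ^ w = (2 ^ k + 1) ^ (2 w)`, a contradiction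
  (`caseB_core`).

* `x ≤ z < y`. This is the main case. For `x = z` congruences modulo `4` and powers of two
  suffice (`caseC_eq`). For `z = x + h` with `h > 0`, one finds `a = a1 a2`,
  `a2 ^ x = n ^ h` and `a1 ^ x + b ^ y n ^ j = c ^ z` with `y = z + j`. The large power of two in
  `b ^ y` forces, in turn, that `z` is odd, that `x` is even, that `a1 ≡ ± 1` modulo `2 ^ E` with
  `2 ^ (2 k - E) ∣ x` (`two_adic`), and that `x` and `z` are coprime. Hence `a2 = s ^ h` and
  `n = s ^ x`. Since `2 ^ k ∣ x`, reduction modulo a prime factor `p` of `2 ^ k + 1` shows that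
  `p ∤ a2` (`residue`), so `s ^ h ∣ 2 ^ k - 1`. The equation is now
  `a1 ^ x + b ^ (h + j) (b s ^ j) ^ x = c ^ (x + h)`. If `s ^ j ≥ 2 ^ (k - 1)` the left side is
  too large (`size_hi`). Otherwise `b s ^ j` is less than `c` by a definite factor, because
  `s ^ j ≡ ± 1` modulo `2 ^ E`, and since `x` is divisible by `2 ^ (2 k - E)` the left side is too
  small (`size_lo`).
-/

/-- The numbers `a = 4 ^ k - 1`, `b = 2 ^ (k + 1)`, `c = 4 ^ k + 1` with `0 < k`, the value of `a`
being given in a form that avoids truncated subtraction. -/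
structure Triple (k a b c : ℕ) : Prop where
  hk : 0 < k
  ha : a + 1 = 4 ^ k
  hb : b = 2 ^ (k + 1)
  hc : c = 4 ^ k + 1

namespace Triple

/-! ### Arithmetic of the triple -/

variable {k a b c : ℕ}

theorem c_eq (T : Triple k a b c) : c = a + 2 := by have := T.ha; have := T.hc; omega

theorem four_pow (k : ℕ) : 4 ^ k = 2 ^ k * 2 ^ k := by
  rw [← Nat.mul_pow]

theorem two_le (T : Triple k a b c) : 2 ≤ 2 ^ k := by
  calc 2 = 2 ^ 1 := rfl
    _ ≤ 2 ^ k := Nat.pow_le_pow_right (by norm_num) T.hk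

theorem b_eq (T : Triple k a b c) : b = 2 * 2 ^ k := by rw [T.hb, pow_succ, mul_comm]

theorem a_ge (T : Triple k a b c) : 3 ≤ a := by
  have h1 := T.ha; have h2 := T.two_le; rw [four_pow] at h1; nlinarith

theorem b_ge (T : Triple k a b c) : 4 ≤ b := by
  have h1 := T.b_eq; have h2 := T.two_le; omega

theorem a_factor (T : Triple k a b c) : a = (2 ^ k - 1) * (2 ^ k + 1) := by
  have h1 := T.ha
  have h2 := T.two_le
  rw [four_pow] at h1
  obtain ⟨q, hq⟩ : ∃ q, 2 ^ k = q + 1 := ⟨2 ^ k - 1, by omega⟩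
  rw [hq] at h1 ⊢
  rw [Nat.add_sub_cancel]
  nlinarith

theorem pyth (T : Triple k a b c) : a ^ 2 + b ^ 2 = c ^ 2 := by
  have h1 := T.ha; have h2 := T.b_eq; have h3 := T.c_eq; rw [four_pow] at h1
  subst h2 h3
  nlinarith

theorem b_lt_c (T : Triple k a b c) : b < c := by
  have := T.pyth; have := T.a_ge; nlinarith

theorem four_dvd (T : Triple k a b c) : 4 ∣ 4 ^ k := dvd_pow_self 4 T.hk.ne'

theorem a_mod (T : Triple k a b c) : a % 4 = 3 := by
  have h1 := T.ha; have h2 := T.four_dvd; omega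

theorem c_mod (T : Triple k a b c) : c % 4 = 1 := by
  have h1 := T.hc; have h2 := T.four_dvd; omega

theorem a_odd (T : Triple k a b c) : Odd a := by
  have := T.a_mod; rw [Nat.odd_iff]; omega

theorem c_odd (T : Triple k a b c) : Odd c := by
  have := T.c_mod; rw [Nat.odd_iff]; omega

theorem b_even (T : Triple k a b c) : Even b := by
  rw [T.b_eq]; exact even_two_mul _

theorem not_dvd_a_c (T : Triple k a b c) {p : ℕ} (hp : p.Prime) (h1 : p ∣ a) (h2 : p ∣ c) :
    False := by
  rw [T.c_eq] at h2
  have h3 : p ∣ 2 := (Nat.dvd_add_right h1).1 h2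
  have h4 : p = 2 := (Nat.prime_dvd_prime_iff_eq hp Nat.prime_two).1 h3
  subst h4
  have := T.a_mod
  omega

theorem eq_two_of_dvd_b (T : Triple k a b c) {p : ℕ} (hp : p.Prime) (h1 : p ∣ b) : p = 2 := by
  rw [T.hb] at h1
  exact (Nat.prime_dvd_prime_iff_eq hp Nat.prime_two).1 (hp.dvd_of_dvd_pow h1)

theorem not_dvd_b_c (T : Triple k a b c) {p : ℕ} (hp : p.Prime) (h1 : p ∣ b) (h2 : p ∣ c) :
    False := by
  have := T.eq_two_of_dvd_b hp h1
  subst this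
  have := T.c_mod
  omega

/-! ### The case `x, y ≤ z` -/

theorem case_big (T : Triple k a b c) {n x y z : ℕ} (hn : 1 < n) (hx : 0 < x) (hy : 0 < y)
    (hxz : x ≤ z) (hyz : y ≤ z) (h : (a * n) ^ x + (b * n) ^ y = (c * n) ^ z) :
    x = 2 ∧ y = 2 ∧ z = 2 := by
  have ha := T.a_ge
  have hb := T.b_ge
  have hbc := T.b_lt_c
  have hac : a < c := by have := T.c_eq; omega
  have hA : 1 < a * n := by nlinarith
  have hB : 1 < b * n := by nlinarith
  have hpy : (a * n) ^ 2 + (b * n) ^ 2 = (c * n) ^ 2 := by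
    simp only [mul_pow, ← add_mul, T.pyth]
  have hAC : a * n < c * n := by nlinarith
  have hBC : b * n < c * n := by nlinarith
  generalize a * n = A at *
  generalize b * n = B at *
  generalize c * n = C at *
  have h1 : A ^ x ≤ A ^ z := Nat.pow_le_pow_right (by omega) hxz
  have h2 : B ^ y ≤ B ^ z := Nat.pow_le_pow_right (by omega) hyz
  rcases lt_trichotomy z 2 with hz | hz | hz
  · have : x = 1 := by omega
    have : y = 1 := by omega
    have : z = 1 := by omega
    subst x y z
    nlinarith
  · subst hz
    refine ⟨?_, ?_, rfl⟩
    · by_contra hne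
      have : A ^ x < A ^ 2 := Nat.pow_lt_pow_right hA (by omega)
      omega
    · by_contra hne
      have : B ^ y < B ^ 2 := Nat.pow_lt_pow_right hB (by omega)
      omega
  · exfalso
    obtain ⟨t, rfl⟩ : ∃ t, z = t + 2 := ⟨z - 2, by omega⟩
    have e1 : A ^ t < C ^ t := Nat.pow_lt_pow_left hAC (by omega)
    have e2 : B ^ t < C ^ t := Nat.pow_lt_pow_left hBC (by omega)
    have e3 : A ^ t * A ^ 2 < C ^ t * A ^ 2 := Nat.mul_lt_mul_of_pos_right e1 (by positivity)
    have e4 : B ^ t * B ^ 2 < C ^ t * B ^ 2 := Nat.mul_lt_mul_of_pos_right e2 (by positivity)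
    have e5 : C ^ (t + 2) = C ^ t * A ^ 2 + C ^ t * B ^ 2 := by rw [pow_add, ← hpy]; ring
    rw [pow_add] at h1 h2
    omega

/-! ### The case `z < x, y` -/

/-- Two coprime factors of a `z`-th power are `z`-th powers, and no divisor of `c` other than `c`
itself exceeds `a = c - 2`. -/
theorem caseA_core (T : Triple k a b c) {M N z : ℕ} (hz : 0 < z) (hN : 1 < N)
    (hcop : M.Coprime N) (hM : a ^ z < M) (h : M * N = c ^ z) : False := by
  obtain ⟨d, rfl⟩ := exists_eq_pow_of_mul_eq_pow (Nat.isUnit_iff.2 hcop) h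
  have h1 : a < d := lt_of_pow_lt_pow_left₀ z (by omega) hM
  have h2 : d ∣ c := (Nat.pow_dvd_pow_iff hz.ne').1 ⟨N, h.symm⟩
  obtain ⟨e, he⟩ := h2
  have h3 := T.c_eq
  have h4 := T.a_ge
  have h5 : e = 1 := by
    have : e < 2 := by by_contra hh; nlinarith
    have : e ≠ 0 := by rintro rfl; omega
    omega
  subst h5
  rw [mul_one] at he
  rw [he] at h
  have : 0 < d ^ z := by apply Nat.pow_pos; omega
  nlinarith

/-- The case `z < x < y`, with `x = z + i` and `y = z + i + j`. -/
theorem caseA_lt (T : Triple k a b c) {n z i j : ℕ} (hn : 1 < n) (hz : 0 < z) (hi : 0 < i)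
    (hj : 0 < j) (h : n ^ i * (a ^ (z + i) + b ^ (z + i + j) * n ^ j) = c ^ z) : False := by
  have ha := T.a_ge
  refine T.caseA_core hz (Nat.one_lt_pow hi.ne' hn) ?_ ?_ ((mul_comm _ _).trans h)
  · refine Nat.Coprime.pow_right _ (Nat.coprime_of_dvd ?_)
    intro p hp h1 h2
    have h3 : p ∣ c := hp.dvd_of_dvd_pow (h ▸ (dvd_pow h2 hi.ne').mul_right _)
    have h4 : p ∣ a ^ (z + i) :=
      (Nat.dvd_add_left ((dvd_pow h2 hj.ne').mul_left _)).1 h1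
    exact T.not_dvd_a_c hp (hp.dvd_of_dvd_pow h4) h3
  · have : a ^ z < a ^ (z + i) := Nat.pow_lt_pow_right (by omega) (by omega)
    omega

/-- The case `z < y < x`, with `y = z + i` and `x = z + i + j`. -/
theorem caseA_gt (T : Triple k a b c) {n z i j : ℕ} (hn : 1 < n) (hz : 0 < z) (hi : 0 < i)
    (hj : 0 < j) (h : n ^ i * (a ^ (z + i + j) * n ^ j + b ^ (z + i)) = c ^ z) : False := by
  have ha := T.a_ge
  refine T.caseA_core hz (Nat.one_lt_pow hi.ne' hn) ?_ ?_ ((mul_comm _ _).trans h)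
  · refine Nat.Coprime.pow_right _ (Nat.coprime_of_dvd ?_)
    intro p hp h1 h2
    have h3 : p ∣ c := hp.dvd_of_dvd_pow (h ▸ (dvd_pow h2 hi.ne').mul_right _)
    have h4 : p ∣ b ^ (z + i) :=
      (Nat.dvd_add_right ((dvd_pow h2 hj.ne').mul_left _)).1 h1
    exact T.not_dvd_b_c hp (hp.dvd_of_dvd_pow h4) h3
  · have h1 : a ^ z < a ^ (z + i + j) := Nat.pow_lt_pow_right (by omega) (by omega)
    have h2 : 0 < n ^ j := by positivity
    have h3 : a ^ (z + i + j) ≤ a ^ (z + i + j) * n ^ j := Nat.le_mul_of_pos_right _ h2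
    omega

/-- Lifting the exponent at all primes at once: if every prime factor of `A ^ m + B ^ m` divides
`A + B`, then `v_p (A ^ m + B ^ m) ≤ v_p (A + B) + v_p m` for all `p`. -/
theorem lte_dvd {A B m : ℕ} (hm : Odd m) (hAB : Odd (A + B)) (hcop : A.Coprime B)
    (h : ∀ p, p.Prime → p ∣ A ^ m + B ^ m → p ∣ A + B) : A ^ m + B ^ m ∣ (A + B) * m := by
  have hm0 : m ≠ 0 := by rintro rfl; simp at hm
  have hAB0 : A + B ≠ 0 := by intro hh; rw [hh] at hAB; simp at hAB
  have h0 : A ^ m + B ^ m ≠ 0 := by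
    intro hh
    have h1 : A ^ m = 0 := by omega
    have h2 : B ^ m = 0 := by omega
    have := pow_eq_zero_iff hm0 |>.1 h1
    have := pow_eq_zero_iff hm0 |>.1 h2
    omega
  rw [← Nat.factorization_prime_le_iff_dvd h0 (mul_ne_zero hAB0 hm0)]
  intro p hp
  by_cases hd : p ∣ A ^ m + B ^ m
  · have h1 := h p hp hd
    have hpA : ¬ p ∣ A := fun hA => by
      have hB : p ∣ B := (Nat.dvd_add_right hA).1 h1
      exact Nat.not_coprime_of_dvd_of_dvd hp.one_lt hA hB hcop
    have hp2 : Odd p := Odd.of_dvd_nat hAB h1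
    have := Fact.mk hp
    rw [Nat.factorization_mul hAB0 hm0, Finsupp.add_apply, Nat.factorization_def _ hp,
      Nat.factorization_def _ hp, Nat.factorization_def _ hp, padicValNat.pow_add_pow hp2 h1 hpA hm]
  · rw [Nat.factorization_eq_zero_of_not_dvd hd]
    exact Nat.zero_le _

/-- The case `z < x = y`, with `x = z + i`. -/
theorem caseA_eq (T : Triple k a b c) {n z i : ℕ} (hn : 1 < n) (hz : 0 < z) (hi : 0 < i)
    (h : n ^ i * (a ^ (z + i) + b ^ (z + i)) = c ^ z) : False := by
  have ha := T.a_ge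
  have hb := T.b_ge
  have hpy := T.pyth
  have key : ∀ p, p.Prime → p ∣ a ^ (z + i) + b ^ (z + i) → p ∣ c := fun p hp hd =>
    hp.dvd_of_dvd_pow (h ▸ hd.mul_left _)
  have hodd : ∀ p, p ∣ c → p.Prime → ¬ p ∣ 2 := by
    intro p hp hpp h2
    have h4 : p = 2 := (Nat.prime_dvd_prime_iff_eq hpp Nat.prime_two).1 h2
    have := T.c_mod
    subst h4
    omega
  rcases Nat.even_or_odd (z + i) with he | ho
  · obtain ⟨m, hm⟩ := he
    have hm2 : z + i = 2 * m := by omega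
    rw [hm2, pow_mul, pow_mul] at h key
    rcases Nat.even_or_odd m with he | ho
    -- `4 ∣ z + i`: modulo `p ∣ c` one has `b ^ 2 = -a ^ 2`, so the sum is `2 a ^ (z + i)`, a unit
    · obtain ⟨p, hp, hpd⟩ := Nat.exists_prime_and_dvd (n := (a ^ 2) ^ m + (b ^ 2) ^ m) (by
        have : 0 < (a ^ 2) ^ m := by positivity
        have : 0 < (b ^ 2) ^ m := by positivity
        omega)
      have h1 := key p hp hpd
      have h2 : ((a : ℤ) ^ 2 - (-(b : ℤ) ^ 2)) ∣ ((a : ℤ) ^ 2) ^ m - (-(b : ℤ) ^ 2) ^ m :=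
        sub_dvd_pow_sub_pow _ _ _
      rw [he.neg_pow] at h2
      have h3 : (p : ℤ) ∣ ((a : ℤ) ^ 2 - (-(b : ℤ) ^ 2)) := by
        have : ((a : ℤ) ^ 2 - (-(b : ℤ) ^ 2)) = ((c ^ 2 : ℕ) : ℤ) := by
          rw [← hpy]; push_cast; ring
        rw [this]
        exact Int.natCast_dvd_natCast.2 (dvd_pow h1 (by norm_num))
      have h4 := h3.trans h2
      have h5 : (p : ℤ) ∣ ((a : ℤ) ^ 2) ^ m + ((b : ℤ) ^ 2) ^ m := by exact_mod_cast hpd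
      have h6 := dvd_add h4 h5
      have h7 : (p : ℤ) ∣ ((2 * (a ^ 2) ^ m : ℕ) : ℤ) := by
        refine h6.trans (dvd_of_eq ?_)
        push_cast; ring
      rcases hp.dvd_mul.1 (Int.natCast_dvd_natCast.1 h7) with h8 | h8
      · exact hodd p h1 hp h8
      · exact T.not_dvd_a_c hp (hp.dvd_of_dvd_pow (hp.dvd_of_dvd_pow h8)) h1
    -- `x = 2 m` with `m` odd: lifting the exponent bounds the sum by `c ^ 2 m`
    · have hcop : (a ^ 2).Coprime (b ^ 2) := by
        refine Nat.Coprime.pow _ _ (Nat.coprime_of_dvd ?_)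
        intro p hp h1 h2
        have := T.eq_two_of_dvd_b hp h2
        subst this
        have := T.a_mod
        omega
      have hd := lte_dvd ho (by rw [hpy]; exact T.c_odd.pow) hcop (fun p hp hd => by
        rw [hpy]; exact dvd_pow (key p hp hd) (by norm_num))
      have hle := Nat.le_of_dvd (by have := ho.pos; positivity) hd
      have hm1 : m = 1 := by
        by_contra hne
        obtain ⟨t, ht⟩ : ∃ t, m = t + 1 := ⟨m - 1, by have := ho.pos; omega⟩
        subst ht
        have h1 : t < 2 ^ t := Nat.lt_two_pow_self
        have h4 : 2 ≤ 2 ^ t := by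
          calc 2 = 2 ^ 1 := rfl
            _ ≤ 2 ^ t := Nat.pow_le_pow_right (by norm_num) (by omega)
        have h5 : (4 : ℕ) ^ t = 2 ^ t * 2 ^ t := four_pow t
        have h6 : t + 1 < 4 ^ t := by nlinarith
        have h2 : 4 ^ t ≤ (a ^ 2) ^ t := Nat.pow_le_pow_left (by nlinarith) t
        have h3 : 4 ^ t ≤ (b ^ 2) ^ t := Nat.pow_le_pow_left (by nlinarith) t
        have h7 : a ^ 2 * (t + 1) < (a ^ 2) ^ (t + 1) := by
          rw [pow_succ (a ^ 2) t, mul_comm (a ^ 2) (t + 1)]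
          exact Nat.mul_lt_mul_of_pos_right (by omega) (by positivity)
        have h8 : b ^ 2 * (t + 1) < (b ^ 2) ^ (t + 1) := by
          rw [pow_succ (b ^ 2) t, mul_comm (b ^ 2) (t + 1)]
          exact Nat.mul_lt_mul_of_pos_right (by omega) (by positivity)
        rw [add_mul] at hle
        omega
      subst hm1
      have hz1 : z = 1 := by omega
      have hi1 : i = 1 := by omega
      subst hz1 hi1
      rw [pow_one, pow_one, pow_one, hpy, pow_one] at h
      have := T.b_lt_c
      nlinarith
  -- `x` odd: a prime factor of `a + b` divides `c`, hence `(a + b) ^ 2 - c ^ 2 = 2 a b`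
  · obtain ⟨p, hp, hpd⟩ := Nat.exists_prime_and_dvd (n := a + b) (by omega)
    have h1 := key p hp (hpd.trans (ho.nat_add_dvd_pow_add_pow a b))
    have h2 : p ∣ 2 * (a * b) := by
      have h3 : (a + b) ^ 2 = c ^ 2 + 2 * (a * b) := by rw [← hpy]; ring
      have h4 : p ∣ (a + b) ^ 2 := dvd_pow hpd (by norm_num)
      rw [h3] at h4
      exact (Nat.dvd_add_right (dvd_pow h1 (by norm_num))).1 h4
    rcases hp.dvd_mul.1 h2 with h8 | h8
    · exact hodd p h1 hp h8
    · rcases hp.dvd_mul.1 h8 with h8 | h8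
      · exact T.not_dvd_a_c hp h8 h1
      · exact T.not_dvd_b_c hp h8 h1

/-! ### The case `y ≤ z < x` -/

theorem two_mul_dvd_of_dvd {k m : ℕ} (h : 4 ^ k - 1 ∣ 2 ^ m - 1) : 2 * k ∣ m := by
  have h1 : (4 : ℕ) ^ k = 2 ^ (2 * k) := by rw [pow_mul]; rfl
  rw [h1] at h
  have h2 := Nat.gcd_eq_left h
  rw [Nat.pow_sub_one_gcd_pow_sub_one] at h2
  have h3 : 0 < 2 ^ (2 * k) := by positivity
  have h4 : 0 < 2 ^ (Nat.gcd (2 * k) m) := by positivity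
  have h5 : 2 ^ (Nat.gcd (2 * k) m) = 2 ^ (2 * k) := by omega
  have h6 := Nat.pow_right_injective le_rfl h5
  exact Nat.gcd_eq_left_iff_dvd.1 h6

theorem D_sq (T : Triple k a b c) : (2 ^ k + 1) ^ 2 = c + b := by
  rw [T.hc, T.b_eq, four_pow]; ring

theorem D_dvd_a (T : Triple k a b c) : 2 ^ k + 1 ∣ a := Dvd.intro_left _ T.a_factor.symm

/-- If `D = 2 ^ k + 1` divides one of `c ^ w ± v`, it is coprime to the other, so all of `D ^ x`
divides the former, which is at most `(c + b) ^ w = D ^ (2 w)`. -/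
theorem caseB_core (T : Triple k a b c) {x w v N : ℕ} (hx : 2 * w < x) (hN : 0 < N)
    (hv : v ≤ b ^ w) (hcop : (2 ^ k + 1).Coprime v)
    (hd : ((2 ^ k + 1 : ℕ) : ℤ) ∣ (c : ℤ) ^ w - v ∨ ((2 ^ k + 1 : ℕ) : ℤ) ∣ (c : ℤ) ^ w + v)
    (h : a ^ x * N + v ^ 2 = c ^ (2 * w)) : False := by
  have ha := T.a_ge
  have hD2 := T.D_sq
  have hDa := T.D_dvd_a
  have hcop2 : (2 ^ k + 1).Coprime (2 * v) := by
    refine Nat.Coprime.mul_right ?_ hcop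
    rw [Nat.coprime_two_right]
    exact (Even.pow_of_ne_zero even_two T.hk.ne').add_one
  set D := 2 ^ k + 1 with hD
  have hI : IsCoprime (D : ℤ) (2 * v) := by exact_mod_cast Nat.isCoprime_iff_coprime.2 hcop2
  have hDx : (D : ℤ) ^ x ∣ ((c : ℤ) ^ w - v) * ((c : ℤ) ^ w + v) := by
    have h1 : ((c : ℤ) ^ w - v) * ((c : ℤ) ^ w + v) = ((a ^ x * N : ℕ) : ℤ) := by
      have : ((a ^ x * N + v ^ 2 : ℕ) : ℤ) = ((c ^ (2 * w) : ℕ) : ℤ) := by rw [h]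
      push_cast at this ⊢
      rw [pow_mul'] at this
      linear_combination -this
    rw [h1]
    exact_mod_cast (pow_dvd_pow_of_dvd hDa x).mul_right N
  have hpos : 0 < a ^ x * N := by positivity
  have hlt : v < c ^ w := by
    rw [pow_mul'] at h
    exact lt_of_pow_lt_pow_left₀ 2 (Nat.zero_le _) (by omega)
  have hle : c ^ w + v ≤ D ^ (2 * w) := by
    rcases Nat.eq_zero_or_pos w with rfl | hw
    · simp at hlt h
      have := T.a_ge
      have : 1 < a ^ x := Nat.one_lt_pow (by omega) (by omega)
      nlinarith
    calc c ^ w + v ≤ c ^ w + b ^ w := by omega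
      _ ≤ (c + b) ^ w := pow_add_pow_le (Nat.zero_le _) (Nat.zero_le _) hw.ne'
      _ = D ^ (2 * w) := by rw [← hD2, pow_mul]
  have hDlt : D ^ (2 * w) < D ^ x := Nat.pow_lt_pow_right (by have := T.two_le; omega) hx
  have hltZ : (v : ℤ) < (c : ℤ) ^ w := by exact_mod_cast hlt
  have hbig : (c : ℤ) ^ w + v < (D : ℤ) ^ x := by exact_mod_cast lt_of_le_of_lt hle hDlt
  rcases hd with hd | hd
  · have h1 : IsCoprime (D : ℤ) ((c : ℤ) ^ w + v) := by
      obtain ⟨e, he⟩ := hd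
      have : (c : ℤ) ^ w + v = 2 * v + D * e := by linear_combination he
      rw [this]
      exact hI.add_mul_left_right e
    have h2 : (D : ℤ) ^ x ∣ (c : ℤ) ^ w - v := h1.pow_left.dvd_of_dvd_mul_right hDx
    have := Int.le_of_dvd (by omega) h2
    omega
  · have h1 : IsCoprime (D : ℤ) ((c : ℤ) ^ w - v) := by
      obtain ⟨e, he⟩ := hd
      have : (c : ℤ) ^ w - v = -(2 * v) + D * e := by linear_combination he
      rw [this]
      exact hI.neg_right.add_mul_left_right e
    have h2 : (D : ℤ) ^ x ∣ (c : ℤ) ^ w + v := h1.pow_left.dvd_of_dvd_mul_left hDx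
    have := Int.le_of_dvd (by omega) h2
    omega

theorem a_dvd_pow (T : Triple k a b c) (z : ℕ) : (a : ℤ) ∣ (c : ℤ) ^ z - 2 ^ z := by
  refine Dvd.dvd.trans ?_ (sub_dvd_pow_sub_pow _ _ _)
  rw [T.c_eq]
  push_cast
  simp

theorem D_dvd_pow (T : Triple k a b c) (z : ℕ) :
    ((2 ^ k + 1 : ℕ) : ℤ) ∣ (c : ℤ) ^ z - 2 ^ z :=
  (Int.natCast_dvd_natCast.2 T.D_dvd_a).trans (T.a_dvd_pow z)

/-- The order of `2` modulo `a = 2 ^ (2 k) - 1` is `2 k`. -/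
theorem a_dvd_two_pow (T : Triple k a b c) {m : ℕ} (h : (a : ℤ) ∣ 2 ^ m - 1) : 2 * k ∣ m := by
  apply two_mul_dvd_of_dvd
  have h1 : 4 ^ k - 1 = a := by have := T.ha; omega
  rw [h1, ← Int.natCast_dvd_natCast, Nat.cast_sub Nat.one_le_two_pow]
  exact_mod_cast h

/-- The equation left for `y < z < x` once the power of two in `b ^ y` has been cancelled; `N` is a
power of `n`. -/
theorem caseB_one (T : Triple k a b c) {x z N : ℕ} (hx : z < x) (hN : 0 < N)
    (h : a ^ x * N + 1 = c ^ z) : False := by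
  have hb := T.b_ge
  have h1 : (a : ℤ) ∣ 2 ^ z - 1 := by
    have h2 : (a : ℤ) ∣ (c : ℤ) ^ z - 1 := by
      have : (c : ℤ) ^ z - 1 = (a : ℤ) ^ x * N := by
        have : ((a ^ x * N + 1 : ℕ) : ℤ) = ((c ^ z : ℕ) : ℤ) := by rw [h]
        push_cast at this
        linear_combination -this
      rw [this]
      exact (dvd_pow_self _ (by omega)).mul_right _
    have h3 := dvd_sub h2 (T.a_dvd_pow z)
    refine h3.trans (dvd_of_eq ?_)
    ring
  obtain ⟨t, ht⟩ := T.a_dvd_two_pow h1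
  have hz : z = 2 * (k * t) := by rw [ht]; ring
  subst hz
  refine T.caseB_core (v := 1) hx hN (Nat.one_le_pow _ _ (by omega)) (Nat.coprime_one_right _) ?_
    (by simpa using h)
  have h4 := T.D_dvd_pow (k * t)
  -- modulo `2 ^ k + 1`, `c ^ (k t) ≡ 2 ^ (k t) ≡ (-1) ^ t`
  have h5 : ((2 ^ k + 1 : ℕ) : ℤ) ∣ 2 ^ (k * t) - (-1) ^ t := by
    rw [pow_mul]
    refine Dvd.dvd.trans ?_ (sub_dvd_pow_sub_pow _ _ _)
    push_cast; simp
  have h6 := dvd_add h4 h5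
  rcases neg_one_pow_eq_or ℤ t with h7 | h7
  · left
    rw [h7] at h6
    refine h6.trans (dvd_of_eq ?_)
    push_cast; ring
  · right
    rw [h7] at h6
    refine h6.trans (dvd_of_eq ?_)
    push_cast; ring

/-- The equation for `y = z < x`; `N` is a power of `n`. -/
theorem caseB_eq (T : Triple k a b c) {x z N : ℕ} (hx : z < x) (hN : 0 < N)
    (h : a ^ x * N + b ^ z = c ^ z) : False := by
  have hb := T.b_eq
  have h1 : (a : ℤ) ∣ 2 ^ (k * z) - 1 := by
    have h2 : (a : ℤ) ∣ (c : ℤ) ^ z - (b : ℤ) ^ z := by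
      have : (c : ℤ) ^ z - (b : ℤ) ^ z = (a : ℤ) ^ x * N := by
        have : ((a ^ x * N + b ^ z : ℕ) : ℤ) = ((c ^ z : ℕ) : ℤ) := by rw [h]
        push_cast at this
        linear_combination -this
      rw [this]
      exact (dvd_pow_self _ (by omega)).mul_right _
    have h3 := dvd_sub (T.a_dvd_pow z) h2
    have h4 : (b : ℤ) ^ z = 2 ^ z * 2 ^ (k * z) := by
      rw [hb, pow_mul, ← mul_pow]; push_cast; rfl
    have h5 : (a : ℤ) ∣ 2 ^ z * (2 ^ (k * z) - 1) := by
      refine h3.trans (dvd_of_eq ?_)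
      rw [h4]; ring
    refine IsCoprime.dvd_of_dvd_mul_left ?_ h5
    apply IsCoprime.pow_right
    exact_mod_cast Nat.isCoprime_iff_coprime.2 (Nat.coprime_two_right.2 T.a_odd)
  obtain ⟨t, ht⟩ := T.a_dvd_two_pow h1
  have hz : z = 2 * t := by
    have := T.hk
    apply Nat.eq_of_mul_eq_mul_left this
    rw [ht]; ring
  subst hz
  refine T.caseB_core (v := b ^ t) hx hN le_rfl ?_ ?_ (by rw [← pow_mul' b 2 t]; exact h)
  · apply Nat.Coprime.pow_right
    rw [T.hb]
    apply Nat.Coprime.pow_right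
    rw [Nat.coprime_two_right]
    exact (Even.pow_of_ne_zero even_two T.hk.ne').add_one
  · have h4 := T.D_dvd_pow t
    -- modulo `2 ^ k + 1`, `b ≡ -2` while `c ≡ 2`
    have h5 : ((2 ^ k + 1 : ℕ) : ℤ) ∣ (b : ℤ) ^ t - (-2) ^ t := by
      refine Dvd.dvd.trans ?_ (sub_dvd_pow_sub_pow _ _ _)
      rw [hb]
      exact ⟨2, by push_cast; ring⟩
    rcases Nat.even_or_odd t with h7 | h7
    · left
      rw [h7.neg_pow] at h5
      refine (dvd_sub h4 h5).trans (dvd_of_eq ?_)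
      push_cast; ring
    · right
      rw [h7.neg_pow] at h5
      refine (dvd_add h4 h5).trans (dvd_of_eq ?_)
      push_cast; ring

/-- The case `y ≤ z < x`, with `z = y + i` and `x = y + i + j`, divided by `n ^ y`. -/
theorem caseB (T : Triple k a b c) {n y i j : ℕ} (hn : 1 < n) (hj : 0 < j)
    (h : a ^ (y + i + j) * n ^ (i + j) + b ^ y = c ^ (y + i) * n ^ i) : False := by
  rcases Nat.eq_zero_or_pos i with rfl | hi
  · simp only [add_zero, zero_add, pow_zero, mul_one] at h
    exact T.caseB_eq (by omega) (by positivity) h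
  have hd : n ^ i ∣ b ^ y := by
    have h1 : n ^ i ∣ a ^ (y + i + j) * n ^ (i + j) :=
      (pow_dvd_pow n (by omega)).mul_left _
    exact (Nat.dvd_add_right h1).1 (h ▸ dvd_mul_left _ _)
  obtain ⟨β, hβ⟩ := hd
  have hni : 0 < n ^ i := by positivity
  have h1 : a ^ (y + i + j) * n ^ j + β = c ^ (y + i) := by
    apply Nat.eq_of_mul_eq_mul_left hni
    rw [mul_comm _ (c ^ _), ← h, hβ, pow_add]; ring
  have hbp : b ^ y = 2 ^ ((k + 1) * y) := by rw [T.hb, pow_mul]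
  have h2n : 2 ∣ n := by
    obtain ⟨p, hp, hpd⟩ := Nat.exists_prime_and_dvd (n := n) (by omega)
    have h2 : p ∣ b ^ y := (dvd_pow hpd hi.ne').trans ⟨β, hβ⟩
    have := T.eq_two_of_dvd_b hp (hp.dvd_of_dvd_pow h2)
    rwa [← this]
  have hβ1 : β = 1 := by
    have h2 : β ∣ 2 ^ ((k + 1) * y) := hbp ▸ ⟨n ^ i, by rw [hβ, mul_comm]⟩
    obtain ⟨s, -, rfl⟩ := (Nat.dvd_prime_pow Nat.prime_two).1 h2
    rcases Nat.eq_zero_or_pos s with rfl | hs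
    · rfl
    exfalso
    have h3 : 2 ∣ c ^ (y + i) := by
      rw [← h1]
      exact dvd_add ((dvd_pow h2n hj.ne').mul_left _) (dvd_pow_self 2 hs.ne')
    have h4 : Odd (c ^ (y + i)) := T.c_odd.pow
    rw [Nat.odd_iff] at h4
    omega
  subst hβ1
  exact T.caseB_one (by omega) (by positivity) h1


/-! ### Powers of two dividing differences of powers -/

theorem two_pow_dvd_left {m P R : ℕ} (h : 2 ^ (m + 1) ∣ P * R) (hR : R % 4 = 2) : 2 ^ m ∣ P := by
  obtain ⟨r, rfl⟩ : ∃ r, R = 2 * r := ⟨R / 2, by omega⟩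
  have h1 : 2 * 2 ^ m ∣ 2 * (P * r) := by
    refine Dvd.dvd.trans (dvd_of_eq ?_) (h.trans (dvd_of_eq ?_)) <;> ring
  have h2 : 2 ^ m ∣ P * r := Nat.dvd_of_mul_dvd_mul_left two_pos h1
  refine Nat.Coprime.dvd_of_dvd_mul_right ?_ h2
  apply Nat.Coprime.pow_left
  rw [Nat.coprime_two_left, Nat.odd_iff]
  omega

/-- Of the two factors of `c ^ (2 w) - v ^ 2`, one is `2` modulo `4`, so the other is divisible by
`b ^ y / 2`, which exceeds `2 c ^ w` when `y > 2 w`. -/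
theorem sq_core (T : Triple k a b c) {v w y N : ℕ} (hv : Odd v) (hN : 0 < N) (hy : 2 * w < y)
    (h : v ^ 2 + b ^ y * N = c ^ (2 * w)) : False := by
  have hb := T.b_ge
  have hcu : Odd (c ^ w) := T.c_odd.pow
  have hlt : v < c ^ w := by
    rw [pow_mul'] at h
    have : 0 < b ^ y * N := by positivity
    exact lt_of_pow_lt_pow_left₀ 2 (Nat.zero_le _) (by omega)
  have hk := T.hk
  have hcle : c ^ w ≤ 2 ^ ((2 * k + 1) * w) := by
    rw [pow_mul]
    apply Nat.pow_le_pow_left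
    rw [T.hc, pow_succ, pow_mul, show (2 : ℕ) ^ 2 = 4 from rfl]
    have : 0 < 4 ^ k := by positivity
    omega
  obtain ⟨d, hd⟩ : ∃ d, c ^ w = v + d := ⟨c ^ w - v, by omega⟩
  have h1 : d * (2 * v + d) = b ^ y * N := by
    rw [pow_mul', hd] at h
    nlinarith
  have hky : (k + 1) * y = ((k + 1) * y - 1) + 1 := by
    have : 0 < (k + 1) * y := by apply Nat.mul_pos <;> omega
    omega
  have h2 : 2 ^ (((k + 1) * y - 1) + 1) ∣ d * (2 * v + d) := by
    rw [h1, ← hky, T.hb, ← pow_mul]; exact dvd_mul_right _ _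
  have h3 : 2 ^ ((k + 1) * y - 1) ≤ 2 * v + d := by
    rw [hd, Nat.odd_iff] at hcu
    rw [Nat.odd_iff] at hv
    have : d % 4 = 2 ∨ (2 * v + d) % 4 = 2 := by omega
    rcases this with h4 | h4
    · rw [mul_comm d] at h2
      exact Nat.le_of_dvd (by omega) (two_pow_dvd_left h2 h4)
    · have := Nat.le_of_dvd (by omega) (two_pow_dvd_left h2 h4)
      omega
  have h4 : 2 ^ ((k + 1) * y - 1) < 2 ^ ((2 * k + 1) * w + 1) := by
    rw [pow_succ 2 ((2 * k + 1) * w)]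
    omega
  have h5 := (Nat.pow_lt_pow_iff_right (by norm_num)).1 h4
  have h6 : (k + 1) * (2 * w + 1) ≤ (k + 1) * y := Nat.mul_le_mul_left _ hy
  have h7 : (k + 1) * (2 * w + 1) = (2 * k + 1) * w + w + k + 1 := by ring
  omega

/-- The case `x = z < y`, with `y = x + j`. -/
theorem caseC_eq (T : Triple k a b c) {x j N : ℕ} (hj : 0 < j) (hx : 0 < x) (hN : 0 < N)
    (h : a ^ x + b ^ (x + j) * N = c ^ x) : False := by
  rcases Nat.even_or_odd x with ⟨w, hw⟩ | ⟨w, hw⟩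
  · have hw2 : x = 2 * w := by omega
    subst hw2
    refine T.sq_core (v := a ^ w) (w := w) T.a_odd.pow hN (y := 2 * w + j) (by omega) ?_
    rw [← h, pow_mul']
  · have h4 : 4 ∣ b ^ (x + j) * N := by
      have : 2 ∣ b := T.b_even.two_dvd
      have h5 : 2 ^ 2 ∣ b ^ 2 := pow_dvd_pow_of_dvd this 2
      exact (h5.trans (pow_dvd_pow b (by omega))).mul_right N
    have ha2 : a ^ 2 % 4 = 1 := by rw [Nat.pow_mod, T.a_mod]
    have ha : a ^ x % 4 = 3 := by
      rw [hw, pow_succ, pow_mul, Nat.mul_mod, Nat.pow_mod, ha2, one_pow, T.a_mod]; norm_num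
    have hc : c ^ x % 4 = 1 := by rw [Nat.pow_mod, T.c_mod, one_pow]; norm_num
    omega

theorem odd_cofactor {X Y : ℤ} (hX : Odd X) (hY : Odd Y) {d : ℕ} (hd : Odd d) :
    ∃ S, Odd S ∧ X ^ d - Y ^ d = (X - Y) * S := by
  obtain ⟨e, rfl⟩ := hd
  induction e with
  | zero => exact ⟨1, odd_one, by simp⟩
  | succ e ih =>
    obtain ⟨S, hS, h⟩ := ih
    refine ⟨X ^ 2 * S + Y ^ (2 * e + 1) * (X + Y), ?_, ?_⟩
    · exact (hX.pow.mul hS).add_even ((hX.add_odd hY).mul_left _)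
    · have : X ^ (2 * (e + 1) + 1) - Y ^ (2 * (e + 1) + 1) =
        X ^ 2 * (X ^ (2 * e + 1) - Y ^ (2 * e + 1)) + Y ^ (2 * e + 1) * (X ^ 2 - Y ^ 2) := by ring
      rw [this, h]; ring

theorem two_pow_dvd_of_odd {X Y : ℤ} (hX : Odd X) (hY : Odd Y) {d m : ℕ} (hd : Odd d)
    (h : (2 : ℤ) ^ m ∣ X ^ d - Y ^ d) : (2 : ℤ) ^ m ∣ X - Y := by
  obtain ⟨S, hS, h1⟩ := odd_cofactor hX hY hd
  rw [h1] at h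
  refine IsCoprime.dvd_of_dvd_mul_right ?_ h
  apply IsCoprime.pow_left
  obtain ⟨r, hr⟩ := hS
  exact ⟨-r, 1, by rw [hr]; ring⟩

theorem two_pow_dvd_left_int {m : ℕ} {P R : ℤ} (h : (2 : ℤ) ^ (m + 1) ∣ P * R) (hR : R % 4 = 2) :
    (2 : ℤ) ^ m ∣ P := by
  obtain ⟨r, rfl⟩ : ∃ r, R = 2 * r := ⟨R / 2, by omega⟩
  have h1 : 2 * 2 ^ m ∣ 2 * (P * r) := by
    refine Dvd.dvd.trans (dvd_of_eq ?_) (h.trans (dvd_of_eq ?_)) <;> ring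
  have h2 : 2 ^ m ∣ P * r := Int.dvd_of_mul_dvd_mul_left two_ne_zero h1
  refine IsCoprime.dvd_of_dvd_mul_right ?_ h2
  apply IsCoprime.pow_left
  exact ⟨-(r / 2), 1, by omega⟩

/-- If `A` is odd and `x > 0` is even with `2 ^ N ∣ A ^ x - 1`, the exponent `N` splits as
`E + (N - E)`, with `2 ^ E` dividing one of `A ± 1` and `2 ^ (N - E)` dividing `x`. By induction on
`x = 2 t`, as one of `A ^ t ± 1` is `2` modulo `4`. -/
theorem two_adic {A : ℤ} (hA : Odd A) : ∀ (x : ℕ), 0 < x → Even x → ∀ N : ℕ, 0 < N →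
    (2 : ℤ) ^ N ∣ A ^ x - 1 →
    ∃ E, 0 < E ∧ E ≤ N ∧ 2 ^ (N - E) ∣ x ∧ ((2 : ℤ) ^ E ∣ A - 1 ∨ (2 : ℤ) ^ E ∣ A + 1) := by
  intro x
  induction x using Nat.strong_induction_on with
  | _ x ih =>
    intro hx0 hxe N hN h
    obtain ⟨t, ht⟩ := hxe
    have ht2 : x = 2 * t := by omega
    rcases Nat.lt_or_ge N 2 with hN2 | hN2
    · have : N = 1 := by omega
      subst this
      refine ⟨1, by norm_num, le_rfl, by simp, Or.inl ?_⟩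
      obtain ⟨r, hr⟩ := hA
      exact ⟨r, by rw [hr]; ring⟩
    obtain ⟨M, rfl⟩ : ∃ M, N = M + 1 := ⟨N - 1, by omega⟩
    have hfac : A ^ x - 1 = (A ^ t - 1) * (A ^ t + 1) := by rw [ht2, pow_mul']; ring
    rw [hfac] at h
    have hAt : Odd (A ^ t) := hA.pow
    rcases Nat.even_or_odd t with hte | hto
    · have h4 : (A ^ t + 1) % 4 = 2 := by
        obtain ⟨s, hs⟩ := hte
        obtain ⟨r, hr⟩ : Odd (A ^ s) := hA.pow
        have h5 : A ^ t = 4 * (r * r + r) + 1 := by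
          rw [hs, pow_add, hr]; ring
        omega
      have h1 := two_pow_dvd_left_int h h4
      obtain ⟨E, hE, hEM, hx, hE2⟩ := ih t (by omega) (by omega) hte M (by omega) h1
      refine ⟨E, hE, by omega, ?_, hE2⟩
      rw [ht2, show M + 1 - E = (M - E) + 1 by omega, pow_succ']
      exact Nat.mul_dvd_mul_left 2 hx
    · refine ⟨M, by omega, by omega, ?_, ?_⟩
      · rw [show M + 1 - M = 1 by omega, ht2]; simp
      · obtain ⟨r, hr⟩ := hAt
        have : (A ^ t + 1) % 4 = 2 ∨ (A ^ t - 1) % 4 = 2 := by omega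
        rcases this with h4 | h4
        · left
          have h1 := two_pow_dvd_left_int h h4
          exact two_pow_dvd_of_odd hA odd_one hto (by rwa [one_pow])
        · right
          rw [mul_comm] at h
          have h1 := two_pow_dvd_left_int h h4
          have := two_pow_dvd_of_odd (Y := -1) (m := M) hA (by decide) hto
            (by rwa [hto.neg_one_pow, sub_neg_eq_add])
          rwa [sub_neg_eq_add] at this

/-! ### Size estimates for `x < z < y` -/

/-- `(1 - 1 / N) ^ N ≤ 1 / 2` for `N = P + 1`, by Bernoulli's inequality. -/
theorem half_pow (P : ℕ) : P ^ (P + 1) * 2 ≤ (P + 1) ^ (P + 1) := by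
  have h : ∀ n, P ^ (n + 1) + (n + 1) * P ^ n ≤ (P + 1) ^ (n + 1) := by
    intro n
    induction n with
    | zero => simp
    | succ n ih =>
      have h1 := Nat.mul_le_mul_right (P + 1) ih
      rw [← pow_succ] at h1
      refine le_trans ?_ h1
      have : (P ^ (n + 1) + (n + 1) * P ^ n) * (P + 1) =
        P ^ (n + 1 + 1) + (n + 1 + 1) * P ^ (n + 1) + (n + 1) * P ^ n := by ring
      omega
  have h1 := h P
  have h2 : (P + 1) * P ^ P = P ^ (P + 1) + P ^ P := by ring
  omega

/-- If `S / U ≤ 1 - 1 / N` and `x` is a positive multiple of `2 ^ q N`, then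
`(S / U) ^ x ≤ 2 ^ (- 2 ^ q)`. -/
theorem pow_decay {S U N q x : ℕ} (hN : 0 < N) (hx : 0 < x) (hNx : N * 2 ^ q ∣ x)
    (h : N * S ≤ (N - 1) * U) : S ^ x * 2 ^ 2 ^ q ≤ U ^ x := by
  obtain ⟨P, rfl⟩ : ∃ P, N = P + 1 := ⟨N - 1, by omega⟩
  rw [Nat.add_sub_cancel] at h
  have h1 : S ^ (P + 1) * 2 ≤ U ^ (P + 1) := by
    have h2 := Nat.pow_le_pow_left h (P + 1)
    rw [mul_pow, mul_pow] at h2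
    have h3 := Nat.mul_le_mul_right (U ^ (P + 1)) (half_pow P)
    have h4 : 0 < (P + 1) ^ (P + 1) := by positivity
    apply Nat.le_of_mul_le_mul_left _ h4
    nlinarith
  obtain ⟨t, rfl⟩ := hNx
  have ht : 0 < t := Nat.pos_of_ne_zero (by rintro rfl; simp at hx)
  have h2 := Nat.pow_le_pow_left h1 (2 ^ q * t)
  rw [mul_pow, ← pow_mul, ← pow_mul] at h2
  have h3 : 2 ^ 2 ^ q ≤ 2 ^ (2 ^ q * t) :=
    Nat.pow_le_pow_right (by norm_num) (Nat.le_mul_of_pos_right _ ht)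
  rw [mul_assoc]
  exact (Nat.mul_le_mul_left _ h3).trans h2

/-- If `s ^ j ≥ 2 ^ (k - 1)` then in fact `s ^ j ≥ 2 ^ (k - 1) + 1`, as `s` is odd, and so
`b s ^ j ≥ c`; moreover `j ≥ h`, whence `b ^ (h + j) ≥ b ^ (2 h) ≥ c ^ h`. -/
theorem size_hi (T : Triple k a b c) {s h j x : ℕ} (hs : Odd s) (hs3 : 3 ≤ s) (hh : 0 < h)
    (hsh : s ^ h ≤ 2 ^ k - 1) (hsj : 2 ^ (k - 1) ≤ s ^ j)
    (heq : b ^ (h + j) * (b * s ^ j) ^ x < c ^ (x + h)) : False := by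
  have hb := T.b_ge
  obtain ⟨m, rfl⟩ : ∃ m, k = m + 1 := ⟨k - 1, by have := T.hk; omega⟩
  rw [Nat.add_sub_cancel] at hsj
  have hQ : 2 ^ (m + 1) = 2 * 2 ^ m := pow_succ' 2 m
  have hpos : 0 < 2 ^ m := by positivity
  have hhj : h ≤ j := by
    by_contra hlt
    have h1 : s ^ (j + 1) ≤ s ^ h := Nat.pow_le_pow_right (by omega) (by omega)
    rw [pow_succ] at h1
    have : s ^ j * 3 ≤ s ^ j * s := Nat.mul_le_mul_left _ hs3
    omega
  have hm : m ≠ 0 := by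
    rintro rfl
    have : s ^ 1 ≤ s ^ h := Nat.pow_le_pow_right (by omega) hh
    simp at this hsh
    omega
  have hsj' : 2 ^ m + 1 ≤ s ^ j := by
    have h1 : Odd (s ^ j) := hs.pow
    have h2 : Even (2 ^ m) := Even.pow_of_ne_zero even_two hm
    have : 2 ^ m ≠ s ^ j := by
      intro hh2
      rw [← hh2] at h1
      exact (Nat.not_odd_iff_even.2 h2) h1
    omega
  have hbc : c ≤ b * s ^ j := by
    rw [T.hc, T.b_eq, four_pow, hQ]
    nlinarith
  have hb2 : c ≤ b ^ 2 := by
    rw [T.hc, T.b_eq, four_pow, hQ]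
    nlinarith
  have h1 : c ^ h ≤ b ^ (h + j) := by
    calc c ^ h ≤ (b ^ 2) ^ h := Nat.pow_le_pow_left hb2 h
      _ = b ^ (2 * h) := by rw [pow_mul]
      _ ≤ b ^ (h + j) := Nat.pow_le_pow_right (by omega) (by omega)
  have h2 : c ^ x ≤ (b * s ^ j) ^ x := Nat.pow_le_pow_left hbc x
  have h3 := Nat.mul_le_mul h1 h2
  rw [pow_add c x h, mul_comm (c ^ x)] at heq
  omega

/-- A gap of `2 ^ r` between `s ^ j` and `2 ^ (k - 1)` makes `b s ^ j` smaller than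
`4 ^ k = b 2 ^ (k - 1)` by the factor `1 - 2 ^ r / 2 ^ (k - 1)`; the power `x` amplifies it to
`2 ^ (- 2 ^ q)`. The conclusion compares exponents of two. -/
theorem size_lo_core (T : Triple k a b c) {s h j x r q : ℕ} (hs3 : 3 ≤ s)
    (hx : 0 < x) (hrk : r ≤ k - 1) (hG : s ^ j + 2 ^ r ≤ 2 ^ (k - 1))
    (hdx : 2 ^ (k - 1 - r) * 2 ^ q ∣ x)
    (heq : c ^ (x + h) ≤ 2 * (b ^ (h + j) * (b * s ^ j) ^ x)) :
    2 * k * h + 2 ^ q ≤ 1 + (k + 1) * (h + j) := by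
  have hb := T.b_ge
  obtain ⟨m, rfl⟩ : ∃ m, k = m + 1 := ⟨k - 1, by have := T.hk; omega⟩
  rw [Nat.add_sub_cancel] at hrk hG hdx
  have hNr : 2 ^ (m - r) * 2 ^ r = 2 ^ m := by rw [← pow_add]; congr 1; omega
  have hN : 0 < 2 ^ (m - r) := by positivity
  have h4 : (4 : ℕ) ^ (m + 1) = b * 2 ^ m := by
    rw [T.b_eq, four_pow, pow_succ]; ring
  have key := pow_decay (S := b * s ^ j) (U := 4 ^ (m + 1)) hN hx hdx (by
    rw [h4, Nat.sub_mul, one_mul]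
    apply Nat.le_sub_of_add_le
    calc 2 ^ (m - r) * (b * s ^ j) + b * 2 ^ m
        = 2 ^ (m - r) * b * (s ^ j + 2 ^ r) := by rw [← hNr]; ring
      _ ≤ 2 ^ (m - r) * b * 2 ^ m := Nat.mul_le_mul_left _ hG
      _ = _ := by ring)
  have hpos : 0 < (b * s ^ j) ^ x := by positivity
  have hc : 4 ^ (m + 1) ≤ c := by rw [T.hc]; omega
  have h5 : (4 ^ (m + 1)) ^ (x + h) ≤ c ^ (x + h) := Nat.pow_le_pow_left hc _
  have h6 : (b * s ^ j) ^ x * ((4 ^ (m + 1)) ^ h * 2 ^ 2 ^ q) ≤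
      (b * s ^ j) ^ x * (2 * b ^ (h + j)) := by
    calc (b * s ^ j) ^ x * ((4 ^ (m + 1)) ^ h * 2 ^ 2 ^ q)
        = ((b * s ^ j) ^ x * 2 ^ 2 ^ q) * (4 ^ (m + 1)) ^ h := by ring
      _ ≤ (4 ^ (m + 1)) ^ x * (4 ^ (m + 1)) ^ h := Nat.mul_le_mul_right _ key
      _ = (4 ^ (m + 1)) ^ (x + h) := (pow_add _ _ _).symm
      _ ≤ 2 * (b ^ (h + j) * (b * s ^ j) ^ x) := h5.trans heq
      _ = _ := by ring
  have h7 := Nat.le_of_mul_le_mul_left h6 hpos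
  have h8 : (4 ^ (m + 1)) ^ h * 2 ^ 2 ^ q = 2 ^ (2 * (m + 1) * h + 2 ^ q) := by
    rw [pow_add 2 (2 * (m + 1) * h), pow_mul 2 (2 * (m + 1)) h, pow_mul 2 2 (m + 1)]; norm_num
  have h9 : 2 * b ^ (h + j) = 2 ^ (1 + (m + 1 + 1) * (h + j)) := by
    rw [pow_add 2 1, pow_mul 2 (m + 1 + 1), T.hb, pow_one]
  rw [h8, h9] at h7
  exact (Nat.pow_le_pow_iff_right (by norm_num)).1 h7

theorem sq_lt_two_pow (k : ℕ) : k * k < 2 ^ k + 2 * k := by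
  induction k with
  | zero => simp
  | succ k ih =>
    have h1 : 2 * k ≤ 2 ^ k + 1 := by
      rcases Nat.eq_zero_or_pos k with rfl | hk
      · simp
      · obtain ⟨m, rfl⟩ : ∃ m, k = m + 1 := ⟨k - 1, by omega⟩
        have : m < 2 ^ m := Nat.lt_two_pow_self
        rw [pow_succ]; omega
    rw [pow_succ]
    nlinarith

/-- If `s ^ j < 2 ^ (k - 1)`, the congruence `s ^ j ≡ ± 1` modulo `2 ^ E` makes the gap to
`2 ^ (k - 1)` at least `2 ^ (E - 1)` when `j > 1`, so that `size_lo_core` applies with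
`2 ^ q = 2 ^ k`, which is large compared with `(k + 1) j`. When `j = 1` a gap of `1` is enough. -/
theorem size_lo (T : Triple k a b c) {s h j x E : ℕ} (hs : Odd s) (hs3 : 3 ≤ s) (hh : 0 < h)
    (hj : 0 < j) (hx : 0 < x) (hE : 0 < E)
    (hEs : (2 : ℤ) ^ E ∣ (s : ℤ) - 1 ∨ (2 : ℤ) ^ E ∣ (s : ℤ) + 1)
    (hEx : 2 ^ (2 * k - E) ∣ x) (hsj : s ^ j < 2 ^ (k - 1))
    (heq : c ^ (x + h) ≤ 2 * (b ^ (h + j) * (b * s ^ j) ^ x)) : False := by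
  have hk := T.hk
  have hss : s ≤ s ^ j := Nat.le_self_pow hj.ne' s
  have hEs1 : 2 ^ E ≤ s + 1 := by
    rcases hEs with h1 | h1
    · have := Int.le_of_dvd (by omega) h1
      zify; omega
    · have := Int.le_of_dvd (by omega) h1
      zify; omega
  have hEk : E ≤ k - 1 := by
    apply (Nat.pow_le_pow_iff_right (a := 2) (by norm_num)).1
    omega
  have hkh : k - 1 ≤ (k - 1) * h := Nat.le_mul_of_pos_right _ hh
  obtain ⟨m, rfl⟩ : ∃ m, k = m + 1 := ⟨k - 1, by omega⟩
  rw [Nat.add_sub_cancel] at hsj hEk hkh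
  by_cases hj1 : j = 1
  · subst hj1
    have h1 := T.size_lo_core (r := 0) (q := 2) hs3 hx (Nat.zero_le _)
      (by rw [Nat.add_sub_cancel]; simp only [pow_zero]; omega)
      (by rw [← pow_add]; exact (pow_dvd_pow 2 (by omega)).trans hEx) heq
    have h2 : 2 * (m + 1) * h = m * h + m * h + 2 * h := by ring
    have h3 : (m + 1 + 1) * (h + 1) = m * h + 2 * h + m + 2 := by ring
    omega
  · obtain ⟨F, rfl⟩ : ∃ F, E = F + 1 := ⟨E - 1, by omega⟩
    have hF : 2 ^ (F + 1) = 2 * 2 ^ F := pow_succ' 2 F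
    have hFpos : 0 < 2 ^ F := by positivity
    have hm2 : ((2 : ℤ) ^ (F + 1)) ∣ 2 ^ m := pow_dvd_pow 2 hEk
    have hsjZ : (s : ℤ) ^ j < 2 ^ m := by exact_mod_cast hsj
    have hFZ : (2 : ℤ) ^ (F + 1) = 2 * 2 ^ F := pow_succ' 2 F
    have hFposZ : (0 : ℤ) < 2 ^ F := by positivity
    have hsO : Odd (s : ℤ) := by exact_mod_cast hs
    have hcase : (2 : ℤ) ^ (F + 1) ∣ (s : ℤ) ^ j - 1 ∨
        (Odd j ∧ (2 : ℤ) ^ (F + 1) ∣ (s : ℤ) ^ j + 1) := by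
      rcases hEs with h1 | h1
      · left
        have := sub_dvd_pow_sub_pow (s : ℤ) 1 j
        rw [one_pow] at this
        exact h1.trans this
      · have := sub_dvd_pow_sub_pow (s : ℤ) (-1) j
        rw [sub_neg_eq_add] at this
        rcases Nat.even_or_odd j with hje | hjo
        · left
          rw [hje.neg_one_pow] at this
          exact h1.trans this
        · right
          rw [hjo.neg_one_pow, sub_neg_eq_add] at this
          exact ⟨hjo, h1.trans this⟩
    have hGZ : (s : ℤ) ^ j + 2 ^ F ≤ 2 ^ m := by
      rcases hcase with h1 | ⟨hjo, h1⟩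
      · have h2 := dvd_sub hm2 h1
        have := Int.le_of_dvd (by omega) h2
        omega
      · have h2 := dvd_sub hm2 h1
        -- `s ^ j + 1 = 2 ^ m` with `j` odd would give `2 ^ m ∣ s + 1`, so `s ^ j ≤ s`
        have hne : (2 : ℤ) ^ m - ((s : ℤ) ^ j + 1) ≠ 0 := by
          intro h0
          have h3 := two_pow_dvd_of_odd (Y := -1) (m := m) hsO (by decide) hjo
            (by rw [hjo.neg_one_pow]; exact ⟨1, by linear_combination -h0⟩)
          have h4 := Int.le_of_dvd (by omega) h3
          have h5 : s ^ j ≤ s := by zify; omega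
          have h6 : s ^ 1 < s ^ j := Nat.pow_lt_pow_right (by omega) (by omega)
          rw [pow_one] at h6
          omega
        have := Int.le_of_dvd (by omega) h2
        omega
    have hG : s ^ j + 2 ^ F ≤ 2 ^ m := by exact_mod_cast hGZ
    have h1 := T.size_lo_core (r := F) (q := m + 1) hs3 hx (by omega)
      (by rwa [Nat.add_sub_cancel])
      (by rw [← pow_add]; exact (pow_dvd_pow 2 (by omega)).trans hEx) heq
    have hjm : j < m := by
      apply (Nat.pow_lt_pow_iff_right (a := 2) (by norm_num)).1
      exact (Nat.pow_le_pow_left (by omega) j).trans_lt hsj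
    have h2 := sq_lt_two_pow (m + 1)
    have h3 : 2 * (m + 1) * h = m * h + m * h + 2 * h := by ring
    have h4 : (m + 1 + 1) * (h + j) = m * h + 2 * h + (m + 2) * j := by ring
    have h5 : (m + 2) * (j + 1) ≤ (m + 2) * m := Nat.mul_le_mul_left _ hjm
    have h6 : (m + 2) * m = m * m + 2 * m := by ring
    have h7 : (m + 1) * (m + 1) = m * m + 2 * m + 1 := by ring
    have h8 : (m + 2) * (j + 1) = (m + 2) * j + m + 2 := by ring
    omega

/-! ### The case `x ≤ z < y` -/

/-- A prime `p` dividing both `2 ^ k + 1` and `a2` would divide `n`, so that modulo `p` the equation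
reads `a1 ^ x = 2 ^ z`, using `c ≡ 2`. As `2 ^ k ∣ x` and `p - 1 ≤ 2 ^ k`, the product of
`x` and the odd part `M` of `p - 1` is divisible by `p - 1`, so `2 ^ (z M) = 1` with `z M` odd. This contradicts `2 ^ k = -1`. -/
theorem residue (T : Triple k a b c) {a1 a2 n x y z h j p : ℕ} (hp : p.Prime)
    (hpD : p ∣ 2 ^ k + 1) (hpa : p ∣ a2) (hx : 0 < x) (hj : 0 < j) (hz : Odd z)
    (hkx : 2 ^ k ∣ x) (hn : a2 ^ x = n ^ h) (h : a1 ^ x + b ^ y * n ^ j = c ^ z) : False := by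
  have := Fact.mk hp
  have hpn : p ∣ n := hp.dvd_of_dvd_pow (hn ▸ dvd_pow hpa hx.ne')
  have hD : (2 : ZMod p) ^ k = -1 := by
    have := (ZMod.natCast_eq_zero_iff (2 ^ k + 1) p).2 hpD
    push_cast at this
    exact eq_neg_of_add_eq_zero_left this
  have h2 : (2 : ZMod p) ≠ 0 := by
    intro h0
    rw [h0, zero_pow T.hk.ne'] at hD
    exact one_ne_zero (α := ZMod p) (by linear_combination hD)
  have hc : (c : ZMod p) = 2 := by
    rw [T.hc]
    push_cast
    rw [show (4 : ZMod p) = 2 * 2 by norm_num, mul_pow, hD]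
    norm_num
  have hn0 : (n : ZMod p) = 0 := (ZMod.natCast_eq_zero_iff n p).2 hpn
  have h1 : (a1 : ZMod p) ^ x = 2 ^ z := by
    have := congrArg (Nat.cast : ℕ → ZMod p) h
    push_cast at this
    rwa [hn0, zero_pow hj.ne', mul_zero, add_zero, hc] at this
  have ha1 : (a1 : ZMod p) ≠ 0 := by
    intro h0
    rw [h0, zero_pow hx.ne'] at h1
    exact pow_ne_zero z h2 h1.symm
  have hp1 : p - 1 ≠ 0 := by have := hp.two_le; omega
  obtain ⟨u, M, hM, hpM⟩ := Nat.exists_eq_two_pow_mul_odd hp1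
  have hu : u ≤ k := by
    apply (Nat.pow_le_pow_iff_right (a := 2) (by norm_num)).1
    have h3 := Nat.le_of_dvd (by positivity) hpD
    have h4 : 2 ^ u ≤ p - 1 := by
      rw [hpM]; exact Nat.le_mul_of_pos_right _ hM.pos
    omega
  have hdiv : p - 1 ∣ x * M := by
    rw [hpM]
    exact Nat.mul_dvd_mul_right ((pow_dvd_pow 2 hu).trans hkx) M
  have h3 : (2 : ZMod p) ^ (z * M) = 1 := by
    rw [pow_mul, ← h1, ← pow_mul]
    obtain ⟨t, ht⟩ := hdiv
    rw [ht, pow_mul, ZMod.pow_card_sub_one_eq_one ha1, one_pow]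
  have h4 : ((2 : ZMod p) ^ k) ^ (z * M) = 1 := by
    rw [← pow_mul, mul_comm, pow_mul, h3, one_pow]
  rw [hD, (hz.mul hM).neg_one_pow] at h4
  exact h2 (by linear_combination -h4)

/-- From `a1 a2 = a ≡ -1` modulo `2 ^ (2 k)`, the factor `a2` is also `± 1` modulo `2 ^ E`. Both factors
are at least `3`, hence at least `2 ^ E - 1`, and their product would exceed `4 ^ k - 1` if `E > k`. -/
theorem cofactor_small (T : Triple k a b c) {a1 a2 : ℕ} (ha : a1 * a2 = a) (h1 : 3 ≤ a1)
    (h2 : 1 < a2) {E : ℕ} (hE : (2 : ℤ) ^ E ∣ (a1 : ℤ) - 1 ∨ (2 : ℤ) ^ E ∣ (a1 : ℤ) + 1)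
    (hE2 : E ≤ 2 * k) :
    ((2 : ℤ) ^ E ∣ (a2 : ℤ) - 1 ∨ (2 : ℤ) ^ E ∣ (a2 : ℤ) + 1) ∧ E ≤ k := by
  have haZ : (a1 : ℤ) * a2 + 1 = 2 ^ (2 * k) := by
    rw [pow_mul, show (2 : ℤ) ^ 2 = 4 by norm_num]
    exact_mod_cast (ha ▸ T.ha)
  have ha2 : 3 ≤ a2 := by
    have := T.a_odd
    rw [← ha, Nat.odd_mul] at this
    have := Nat.odd_iff.1 this.2
    omega
  have hN : (2 : ℤ) ^ E ∣ a1 * a2 + 1 := haZ ▸ pow_dvd_pow 2 hE2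
  have hmain : (2 : ℤ) ^ E ∣ (a2 : ℤ) - 1 ∨ (2 : ℤ) ^ E ∣ (a2 : ℤ) + 1 := by
    rcases hE with h | h
    · right
      have := dvd_sub hN (h.mul_right a2)
      rwa [show (a1 : ℤ) * a2 + 1 - (a1 - 1) * a2 = a2 + 1 by ring] at this
    · left
      have := dvd_sub (h.mul_right a2) hN
      rwa [show ((a1 : ℤ) + 1) * a2 - (a1 * a2 + 1) = a2 - 1 by ring] at this
  refine ⟨hmain, ?_⟩
  by_contra hlt
  have aux : ∀ t : ℕ, 3 ≤ t → ((2 : ℤ) ^ E ∣ (t : ℤ) - 1 ∨ (2 : ℤ) ^ E ∣ (t : ℤ) + 1) →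
      2 ^ E ≤ t + 1 := by
    intro t ht h
    rcases h with h | h
    · have := Int.le_of_dvd (by omega) h
      zify; omega
    · have := Int.le_of_dvd (by omega) h
      zify; omega
  have h3 := aux a1 h1 hE
  have h4 := aux a2 ha2 hmain
  have h5 : 2 ^ (k + 1) ≤ 2 ^ E := Nat.pow_le_pow_right (by norm_num) (by omega)
  rw [pow_succ] at h5
  have h6 := T.ha
  have h7 := T.two_le
  rw [four_pow, ← ha] at h6
  have h8 : 2 ^ k * 2 - 1 ≤ a1 := by omega
  have h9 : 2 ^ k * 2 - 1 ≤ a2 := by omega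
  have h10 := Nat.mul_le_mul h8 h9
  obtain ⟨q, hq⟩ : ∃ q, 2 ^ k = q + 1 := ⟨2 ^ k - 1, by omega⟩
  rw [hq] at h6 h7 h10
  rw [show (q + 1) * 2 - 1 = 2 * q + 1 by omega] at h10
  nlinarith

/-- Since `2 * 4 ^ k ∣ b ^ y` and `c ≡ 1` modulo `4 ^ k`, also `a1 ^ x ≡ 1` modulo `4 ^ k`. Hence
`a1 = 1` or `x` is even, so `a1 ^ x` is a square and `z` is odd by `sq_core`. Then
`c ^ z ≡ 1 + 4 ^ k` modulo `2 * 4 ^ k` excludes `a1 = 1`. -/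
theorem caseC_parity (T : Triple k a b c) {a1 a2 x y z N : ℕ} (ha : a1 * a2 = a)
    (h2 : 1 < a2) (hx : 0 < x) (hN : 0 < N) (hyz : z < y) (hxz : x < z)
    (h : a1 ^ x + b ^ y * N = c ^ z) :
    (2 : ℤ) ^ (2 * k) ∣ (a1 : ℤ) ^ x - 1 ∧ Even x ∧ Odd z ∧ 3 ≤ a1 := by
  have ha1 : Odd a1 := by
    have := T.a_odd
    rw [← ha, Nat.odd_mul] at this
    exact this.1
  have ha1Z : Odd (a1 : ℤ) := by exact_mod_cast ha1
  have h4 : (2 : ℤ) ^ (2 * k) = 4 ^ k := by rw [pow_mul]; norm_num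
  have hby : 2 * (4 : ℤ) ^ k ∣ (b : ℤ) ^ y * N := by
    apply Dvd.dvd.mul_right
    refine Dvd.dvd.trans ?_ (pow_dvd_pow (b : ℤ) (show 2 ≤ y by omega))
    refine ⟨2, ?_⟩
    rw [T.hb, ← h4]
    push_cast
    ring
  have hZ : (a1 : ℤ) ^ x + (b : ℤ) ^ y * N = (c : ℤ) ^ z := by exact_mod_cast h
  have hcZ : (c : ℤ) = 4 ^ k + 1 := by rw [T.hc]; push_cast; rfl
  have hc1 : (4 : ℤ) ^ k ∣ (c : ℤ) ^ z - 1 := by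
    have := sub_dvd_pow_sub_pow (c : ℤ) 1 z
    rwa [one_pow, hcZ, add_sub_cancel_right, ← hcZ] at this
  have hd : (2 : ℤ) ^ (2 * k) ∣ (a1 : ℤ) ^ x - 1 := by
    rw [h4]
    have := dvd_sub hc1 ((Dvd.intro_left _ rfl).trans hby)
    rwa [show (c : ℤ) ^ z - 1 - (b : ℤ) ^ y * N = a1 ^ x - 1 by rw [← hZ]; ring] at this
  have hor : a1 = 1 ∨ Even x := by
    rcases Nat.even_or_odd x with hxe | hxo
    · exact Or.inr hxe
    · left
      have h5 := two_pow_dvd_of_odd ha1Z odd_one hxo (m := 2 * k) (by rwa [one_pow])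
      by_contra hne
      have h6 := ha1.pos
      have h7 := Int.le_of_dvd (by omega) h5
      rw [h4] at h7
      have h8 : 4 ^ k + 1 ≤ a1 := by zify; omega
      have h9 := T.ha
      have h10 : a1 * 1 ≤ a1 * a2 := Nat.mul_le_mul_left _ (by omega)
      omega
  have hz : Odd z := by
    by_contra hze
    obtain ⟨w, hw⟩ := Nat.not_odd_iff_even.1 hze
    have hw2 : z = 2 * w := by omega
    subst hw2
    obtain ⟨v, hv, hvx⟩ : ∃ v, Odd v ∧ v ^ 2 = a1 ^ x := by
      rcases hor with h1 | ⟨r, hr⟩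
      · exact ⟨1, odd_one, by rw [h1]; simp⟩
      · exact ⟨a1 ^ r, ha1.pow, by rw [hr, ← pow_mul]; congr 1; omega⟩
    exact T.sq_core (v := v) (w := w) (y := y) hv hN hyz (by rw [hvx]; exact h)
  have hne : a1 ≠ 1 := by
    intro h1
    obtain ⟨w, hw⟩ := hz
    rw [h1, Nat.cast_one, one_pow] at hZ
    have h5 : 2 * (4 : ℤ) ^ k ∣ (c : ℤ) ^ z - 1 := by
      rwa [show (c : ℤ) ^ z - 1 = (b : ℤ) ^ y * N by rw [← hZ]; ring]
    obtain ⟨t, ht⟩ : (2 : ℤ) * 4 ^ k ∣ (c : ℤ) ^ (2 * w) - 1 := by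
      have h6 := sub_dvd_pow_sub_pow ((c : ℤ) ^ 2) 1 w
      rw [one_pow, ← pow_mul] at h6
      refine Dvd.dvd.trans ?_ h6
      obtain ⟨e, he⟩ : (2 : ℤ) ∣ 4 ^ k := by exact_mod_cast (Nat.dvd_trans (by norm_num) T.four_dvd)
      exact ⟨e + 1, by rw [hcZ]; linear_combination (4 ^ k) * he⟩
    have h6 : (2 : ℤ) * 4 ^ k ∣ 4 ^ k := by
      have h7 : (c : ℤ) ^ z - 1 - 2 * 4 ^ k * (t * c) = 4 ^ k := by
        rw [hw, pow_succ]
        linear_combination (c : ℤ) * ht + hcZ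
      have h8 := dvd_sub h5 (dvd_mul_right (2 * (4 : ℤ) ^ k) (t * c))
      rwa [h7] at h8
    have hpos : (0 : ℤ) < 4 ^ k := by positivity
    have := Int.le_of_dvd hpos h6
    omega
  refine ⟨hd, hor.resolve_left hne, hz, ?_⟩
  have := Nat.odd_iff.1 ha1
  omega

/-- If `d` is the gcd of `x = d x'` and `z = d z'`, the power of two in `b ^ y` divides
`c ^ z' - a1 ^ x'`, as `d` is odd. Comparing sizes, `y < 2 z'`, and `d z' < y` gives `d = 1`. -/
theorem coprime_of_odd (T : Triple k a b c) {a1 x y z N : ℕ} (ha1 : Odd a1)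
    (hx : 0 < x) (hN : 0 < N) (hyz : z < y) (hz : Odd z)
    (h : a1 ^ x + b ^ y * N = c ^ z) : x.Coprime z := by
  obtain ⟨x', hx'⟩ := Nat.gcd_dvd_left x z
  obtain ⟨z', hz'⟩ := Nat.gcd_dvd_right x z
  have hd0 : 0 < x.gcd z := Nat.gcd_pos_of_pos_left _ hx
  change x.gcd z = 1
  generalize x.gcd z = d at *
  subst hx' hz'
  have hb := T.b_ge
  have hdo : Odd d := (Nat.odd_mul.1 hz).1
  have hzo' : Odd z' := (Nat.odd_mul.1 hz).2
  have hlt : a1 ^ x' < c ^ z' := by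
    rw [mul_comm d x', mul_comm d z', pow_mul, pow_mul] at h
    have : 0 < b ^ y * N := by positivity
    exact lt_of_pow_lt_pow_left₀ d (Nat.zero_le _) (by omega)
  have h1 : (2 : ℤ) ^ ((k + 1) * y) ∣ ((c : ℤ) ^ z') ^ d - ((a1 : ℤ) ^ x') ^ d := by
    have hZ : (a1 : ℤ) ^ (d * x') + (b : ℤ) ^ y * N = (c : ℤ) ^ (d * z') := by exact_mod_cast h
    rw [← pow_mul, ← pow_mul, mul_comm z', mul_comm x', ← hZ, add_sub_cancel_left, T.hb, pow_mul]
    push_cast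
    exact dvd_mul_right _ _
  have hcO : Odd (c : ℤ) := by exact_mod_cast T.c_odd
  have haO : Odd (a1 : ℤ) := by exact_mod_cast ha1
  have h2 := two_pow_dvd_of_odd hcO.pow haO.pow hdo h1
  have hltZ : (a1 : ℤ) ^ x' < (c : ℤ) ^ z' := by exact_mod_cast hlt
  have h3 := Int.le_of_dvd (by omega) h2
  have hapos : (0 : ℤ) ≤ (a1 : ℤ) ^ x' := by positivity
  have h4 : 2 ^ ((k + 1) * y) ≤ c ^ z' := by
    zify; omega
  have h5 : c ^ z' < 2 ^ ((k + 1) * (2 * z')) := by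
    have h6 : c < 4 ^ (k + 1) := by
      rw [T.hc, pow_succ]
      have : 0 < 4 ^ k := by positivity
      omega
    have h7 := Nat.pow_lt_pow_left h6 (n := z') hzo'.pos.ne'
    rwa [show (4 : ℕ) = 2 ^ 2 by norm_num, ← pow_mul, ← pow_mul,
      show 2 * ((k + 1) * z') = (k + 1) * (2 * z') by ring] at h7
  have h6 := (Nat.pow_lt_pow_iff_right (by norm_num)).1 (h4.trans_lt h5)
  have h7 : y < 2 * z' := Nat.lt_of_mul_lt_mul_left h6
  have h8 : d * z' < 2 * z' := hyz.trans h7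
  have h9 : d < 2 := Nat.lt_of_mul_lt_mul_right h8
  omega

/-- The equation for `x < z < y`, where `z = x + h` and `y = x + h + j`, after removal of the part
`a2` of `a` that is absorbed by the powers of `n`. -/
theorem finalC (T : Triple k a b c) {a1 a2 n x h j : ℕ} (ha : a1 * a2 = a) (h2 : 1 < a2)
    (hx : 0 < x) (hh : 0 < h) (hj : 0 < j) (hn : 1 < n) (hn2 : a2 ^ x = n ^ h)
    (heq : a1 ^ x + b ^ (x + h + j) * n ^ j = c ^ (x + h)) : False := by
  have hb := T.b_ge
  have hN : 0 < n ^ j := by positivity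
  obtain ⟨hd, hxe, hz, ha1⟩ :=
    T.caseC_parity (z := x + h) ha h2 hx hN (by omega) (by omega) heq
  have hodd := T.a_odd
  rw [← ha, Nat.odd_mul] at hodd
  have hho : Odd h := by
    rcases Nat.even_or_odd h with hhe | hho
    · exact absurd (hxe.add hhe) (Nat.not_even_iff_odd.2 hz)
    · exact hho
  have haO : Odd (a1 : ℤ) := by exact_mod_cast hodd.1
  obtain ⟨E, hE, hEk2, hEx, hEa⟩ := two_adic haO x hx hxe (2 * k) (by have := T.hk; omega) hd
  obtain ⟨hEa2, hEk⟩ := T.cofactor_small ha ha1 h2 hEa hEk2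
  have hkx : 2 ^ k ∣ x := (pow_dvd_pow 2 (by omega)).trans hEx
  have hcop := T.coprime_of_odd (z := x + h) hodd.1 hx hN (by omega) hz heq
  have hcop' : x.Coprime h := by
    rw [add_comm] at hcop
    simpa using hcop
  obtain ⟨s, hs, hsn⟩ := Nat.exists_eq_pow_of_exponent_coprime_of_pow_eq_pow hcop' hn2
  have hsO : Odd s := by
    have := hodd.2
    rw [hs] at this
    exact (Nat.odd_pow_iff hh.ne').1 this
  have hs3 : 3 ≤ s := by
    have h3 : s ≠ 1 := by rintro rfl; rw [one_pow] at hs; omega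
    have := Nat.odd_iff.1 hsO
    omega
  have hsOZ : Odd (s : ℤ) := by exact_mod_cast hsO
  have hEs : (2 : ℤ) ^ E ∣ (s : ℤ) - 1 ∨ (2 : ℤ) ^ E ∣ (s : ℤ) + 1 := by
    rw [hs] at hEa2
    push_cast at hEa2
    rcases hEa2 with h3 | h3
    · exact Or.inl (two_pow_dvd_of_odd hsOZ odd_one hho (by rwa [one_pow]))
    · right
      have := two_pow_dvd_of_odd (Y := -1) (m := E) hsOZ (by decide) hho
        (by rwa [hho.neg_one_pow, sub_neg_eq_add])
      rwa [sub_neg_eq_add] at this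
  have h2k := T.two_le
  have hsh : s ^ h ≤ 2 ^ k - 1 := by
    rw [← hs]
    apply Nat.le_of_dvd (by omega)
    have hcD : a2.Coprime (2 ^ k + 1) := by
      apply Nat.coprime_of_dvd
      intro p hp hpa hpD
      exact T.residue hp hpD hpa hx hj hz hkx hn2 heq
    refine hcD.dvd_of_dvd_mul_right ?_
    rw [← T.a_factor, ← ha]
    exact dvd_mul_left _ _
  have hre : b ^ (x + h + j) * n ^ j = b ^ (h + j) * (b * s ^ j) ^ x := by
    rw [hsn, mul_pow, ← pow_mul, ← pow_mul, mul_comm x j]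
    ring
  rw [hre] at heq
  have hapos : 0 < a1 ^ x := by positivity
  rcases Nat.lt_or_ge (s ^ j) (2 ^ (k - 1)) with hlo | hhi
  · refine T.size_lo hsO hs3 hh hj hx hE hEs hEx hlo ?_
    -- `a1 ^ x` is at most half of `c ^ (x + h)`, so dropping it costs a factor `2`
    have h3 : 2 * a1 ^ x ≤ c ^ (x + h) := by
      calc 2 * a1 ^ x ≤ a2 ^ x * a1 ^ x := by
            apply Nat.mul_le_mul_right
            exact h2.trans_le (Nat.le_self_pow hx.ne' a2)
        _ = a ^ x := by rw [← mul_pow, mul_comm a2, ha]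
        _ ≤ c ^ x := Nat.pow_le_pow_left (by have := T.c_eq; omega) x
        _ ≤ c ^ (x + h) := Nat.pow_le_pow_right (by have := T.c_eq; omega) (by omega)
    omega
  · exact T.size_hi (x := x) hsO hs3 hh hsh hhi (by omega)

/-- The case `x ≤ z < y`, with `z = x + i` and `y = x + i + j`, divided by `n ^ x`. -/
theorem caseC (T : Triple k a b c) {n x i j : ℕ} (hn : 1 < n) (hx : 0 < x) (hj : 0 < j)
    (h : a ^ x + b ^ (x + i + j) * n ^ (i + j) = c ^ (x + i) * n ^ i) : False := by
  rcases Nat.eq_zero_or_pos i with rfl | hi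
  · refine T.caseC_eq (N := n ^ j) hj hx (by positivity) ?_
    simpa using h
  have hnpos : 0 < n ^ i := by positivity
  have hnd : n ^ i ∣ a ^ x := by
    have h1 : n ^ i ∣ a ^ x + b ^ (x + i + j) * n ^ (i + j) := h ▸ dvd_mul_left _ _
    have h2 : n ^ i ∣ b ^ (x + i + j) * n ^ (i + j) :=
      (pow_dvd_pow n (by omega)).mul_left _
    exact (Nat.dvd_add_left h2).1 h1
  obtain ⟨α, hα⟩ := hnd
  have heq : α + b ^ (x + i + j) * n ^ j = c ^ (x + i) := by
    apply Nat.eq_of_mul_eq_mul_left hnpos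
    rw [mul_add, ← hα, mul_comm (n ^ i) (c ^ _), ← h, pow_add n i j]
    ring
  have hcop : Nat.Coprime α (n ^ i) := by
    apply Nat.coprime_of_dvd
    intro p hp hpα hpn
    have hpn' : p ∣ n := hp.dvd_of_dvd_pow hpn
    have hpc : p ∣ c := by
      apply hp.dvd_of_dvd_pow (n := x + i)
      rw [← heq]
      exact dvd_add hpα ((dvd_pow hpn' hj.ne').mul_left _)
    have hpa : p ∣ a := by
      apply hp.dvd_of_dvd_pow (n := x)
      rw [hα]
      exact hpα.mul_left _
    exact T.not_dvd_a_c hp hpa hpc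
  have hmul : α * n ^ i = a ^ x := by rw [hα, mul_comm]
  obtain ⟨a1, ha1⟩ := exists_eq_pow_of_mul_eq_pow (Nat.isUnit_iff.2 hcop) hmul
  obtain ⟨a2, ha2⟩ := exists_eq_pow_of_mul_eq_pow (Nat.isUnit_iff.2 hcop.symm)
    ((mul_comm _ _).trans hmul)
  have ha : a1 * a2 = a := by
    rw [ha1, ha2, ← mul_pow] at hmul
    exact Nat.pow_left_injective hx.ne' hmul
  have h2 : 1 < a2 := by
    by_contra hle
    have h3 : a2 ^ x ≤ 1 ^ x := Nat.pow_le_pow_left (by omega) x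
    rw [← ha2, one_pow] at h3
    have := Nat.one_lt_pow hi.ne' hn
    omega
  exact T.finalC ha h2 hx hi hj hn ha2.symm (ha1 ▸ heq)

end Triple

theorem stmt_13 (k n : ℕ) (hk : 0 < k) (hn : 1 < n)
    (x y z : ℕ) (hx : 0 < x) (hy : 0 < y) (hz : 0 < z) :
    ((4 ^ k - 1) * n) ^ x + (2 ^ (k + 1) * n) ^ y = ((4 ^ k + 1) * n) ^ z ↔
      (x, y, z) = (2, 2, 2) := by
  have hpos : 0 < 4 ^ k := by positivity
  have T : Triple k (4 ^ k - 1) (2 ^ (k + 1)) (4 ^ k + 1) := ⟨hk, by omega, rfl, rfl⟩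
  generalize 4 ^ k - 1 = a at T ⊢
  generalize 2 ^ (k + 1) = b at T ⊢
  generalize 4 ^ k + 1 = c at T ⊢
  rw [Prod.mk.injEq, Prod.mk.injEq]
  constructor
  · intro h
    by_cases hxz : x ≤ z
    · by_cases hyz : y ≤ z
      · exact T.case_big hn hx hy hxz hyz h
      · exfalso
        obtain ⟨i, rfl⟩ := Nat.exists_eq_add_of_le hxz
        obtain ⟨j, rfl⟩ := Nat.exists_eq_add_of_lt (not_le.1 hyz)
        refine T.caseC (n := n) (x := x) (i := i) (j := j + 1) hn hx (by omega) ?_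
        apply Nat.eq_of_mul_eq_mul_left (show 0 < n ^ x by positivity)
        simp only [mul_pow] at h
        linear_combination h
    · exfalso
      by_cases hyz : y ≤ z
      · obtain ⟨i, rfl⟩ := Nat.exists_eq_add_of_le hyz
        obtain ⟨j, rfl⟩ := Nat.exists_eq_add_of_lt (not_le.1 hxz)
        refine T.caseB (n := n) (y := y) (i := i) (j := j + 1) hn (by omega) ?_
        apply Nat.eq_of_mul_eq_mul_left (show 0 < n ^ y by positivity)
        simp only [mul_pow] at h
        linear_combination h
      · have hnz : 0 < n ^ z := by positivity
        obtain ⟨i, rfl⟩ := Nat.exists_eq_add_of_lt (not_le.1 hxz)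
        rcases lt_trichotomy (z + i + 1) y with hlt | heq | hgt
        · obtain ⟨j, rfl⟩ := Nat.exists_eq_add_of_lt hlt
          refine T.caseA_lt (n := n) (z := z) (i := i + 1) (j := j + 1) hn hz
            (by omega) (by omega) ?_
          apply Nat.eq_of_mul_eq_mul_left hnz
          simp only [mul_pow] at h
          linear_combination h
        · subst heq
          refine T.caseA_eq (n := n) (z := z) (i := i + 1) hn hz (by omega) ?_
          apply Nat.eq_of_mul_eq_mul_left hnz
          simp only [mul_pow] at h
          linear_combination h
        · obtain ⟨e, rfl⟩ := Nat.exists_eq_add_of_lt (not_le.1 hyz)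
          obtain ⟨j, hj⟩ := Nat.exists_eq_add_of_lt hgt
          obtain rfl : i = e + 1 + j := by omega
          refine T.caseA_gt (n := n) (z := z) (i := e + 1) (j := j + 1) hn hz
            (by omega) (by omega) ?_
          apply Nat.eq_of_mul_eq_mul_left hnz
          simp only [mul_pow] at h
          linear_combination h
  · rintro ⟨rfl, rfl, rfl⟩
    rw [mul_pow, mul_pow, mul_pow, ← add_mul, T.pyth]
end

section
/- (Le; Yang–Fu) Let f, g, n be positive integers with f > g, gcd(f,g) = 1, fg even, and n > 1. Let P(n) denote the product of the distinct prime divisors of n. Then every solution in positive integers (x,y,z) of ((f^2−g^2)n)^x + (2fg·n)^y = ((f^2+g^2)n)^z other than (2,2,2) satisfies either x > z > y and P(n) divides 2fg, or y > z > x and P(n) divides f^2 − g^2. -/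
/-!
Write `A = f ^ 2 - g ^ 2`, `B = 2 * f * g`, `C = f ^ 2 + g ^ 2`: a primitive Pythagorean triple.
The proof excludes every order type of `(x, y, z)` except `x > z > y` and `y > z > x`, and in these
two a comparison of powers of `n` gives the divisibility (`dvd_pow_of_lt_lt`).

* If `z ≥ max x y`, sizes force `(2, 2, 2)` (`eq_two_of_le`).
* If `z < min x y` and `x ≠ y`, then `n` divides a power of `C`, so it is coprime to `A * B`, and
  the equation splits `C` into two factors, one of which exceeds `max A B` (`not_lt_lt`).
* If `z` equals the smaller of `x, y`, say `x = z < y`, then `B ^ y ∣ C ^ x - A ^ x`. For even `x`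
  lifting the exponent gives `B ^ (y - 2) ∣ x / 2`, which is absurd; for odd `x` the factorizations
  `C + A = 2 * f ^ 2` and `C + B = (f + g) ^ 2` give a contradiction (`not_eq_lt`).
* If `x = y > z`, then `A ^ x + B ^ x` divides a power of `C`, and lifting the exponent bounds it
  by `C ^ 2 * (x / 2)`, which is too small (`not_eq_gt`).
-/

/-- `P t` is the product of the distinct prime divisors of `t` (the radical of `t`). -/
def P (t : ℕ) : ℕ := t.primeFactors.prod id

theorem P_dvd_of_dvd_pow {n m k : ℕ} (hm : m ≠ 0) (h : n ∣ m ^ k) : P n ∣ m := by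
  have hsub : n.primeFactors ⊆ m.primeFactors := by
    intro p hp
    have hpp := Nat.prime_of_mem_primeFactors hp
    exact Nat.mem_primeFactors.2
      ⟨hpp, hpp.dvd_of_dvd_pow ((Nat.dvd_of_mem_primeFactors hp).trans h), hm⟩
  exact (Finset.prod_dvd_prod_of_subset _ _ id hsub).trans (Nat.prod_primeFactors_dvd m)

/-- When `z` is the largest exponent, sizes alone force `x = y = z = 2`: for `z ≥ 3` one has
`c ^ z = c ^ (z - 2) * (a ^ 2 + b ^ 2) > a ^ z + b ^ z`. No coprimality is needed. -/
theorem eq_two_of_le {a b c x y z : ℕ} (ha : 2 ≤ a) (hb : 2 ≤ b) (h : a ^ 2 + b ^ 2 = c ^ 2)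
    (hx : 0 < x) (hy : 0 < y) (hxz : x ≤ z) (hyz : y ≤ z)
    (he : a ^ x + b ^ y = c ^ z) : x = 2 ∧ y = 2 ∧ z = 2 := by
  have hac : a < c := by nlinarith
  have hbc : b < c := by nlinarith
  rcases Nat.lt_or_ge z 3 with hz | hz
  · have hz0 : 0 < z := hx.trans_le hxz
    interval_cases z <;> interval_cases x <;> interval_cases y <;> simp_all <;> nlinarith
  · exfalso
    obtain ⟨t, rfl⟩ : ∃ t, z = t + 2 := ⟨z - 2, by omega⟩
    have h1 : a ^ t < c ^ t := Nat.pow_lt_pow_left hac (by omega)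
    have h2 : b ^ t < c ^ t := Nat.pow_lt_pow_left hbc (by omega)
    have h3 : a ^ x ≤ a ^ (t + 2) := Nat.pow_le_pow_right (by omega) hxz
    have h4 : b ^ y ≤ b ^ (t + 2) := Nat.pow_le_pow_right (by omega) hyz
    have h5 : a ^ t * a ^ 2 < c ^ t * a ^ 2 := Nat.mul_lt_mul_of_pos_right h1 (by positivity)
    have h6 : b ^ t * b ^ 2 < c ^ t * b ^ 2 := Nat.mul_lt_mul_of_pos_right h2 (by positivity)
    have h7 : c ^ (t + 2) = c ^ t * a ^ 2 + c ^ t * b ^ 2 := by rw [pow_add, ← h]; ring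
    rw [pow_add] at h3 h4
    omega

/-- Exclusion of `x > y > z`. Here `n` divides a power of `c`, so it is coprime to `b`, and
`n ^ (y - z) * (n ^ (x - y) * a ^ x + b ^ y) = c ^ z` splits `c` as a product `r * s` with
`r ≥ 2` and `s > max a b`, which contradicts `c < a + b`. -/
theorem not_lt_lt {a b c n x y z : ℕ} (ha : 2 ≤ a) (hb : 2 ≤ b) (h : a ^ 2 + b ^ 2 = c ^ 2)
    (hcop : Nat.Coprime b c) (hn : 1 < n) (hz : 0 < z) (hzy : z < y) (hyx : y < x)
    (he : (a * n) ^ x + (b * n) ^ y = (c * n) ^ z) : False := by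
  obtain ⟨i, rfl⟩ : ∃ i, y = z + (i + 1) := ⟨y - z - 1, by omega⟩
  obtain ⟨j, rfl⟩ : ∃ j, x = z + (i + 1) + (j + 1) := ⟨x - (z + (i + 1)) - 1, by omega⟩
  set D := n ^ (j + 1) * a ^ (z + (i + 1) + (j + 1)) + b ^ (z + (i + 1)) with hD
  have he' : n ^ (i + 1) * D = c ^ z := by
    have hpos : 0 < n ^ z := by positivity
    apply Nat.eq_of_mul_eq_mul_left hpos
    calc _ = _ := by rw [hD]; ring
      _ = _ := he
      _ = _ := by ring
  have hnc : n ∣ c ^ z := (dvd_pow_self n (by omega)).trans (Dvd.intro _ he')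
  have hnb : Nat.Coprime n b := ((hcop.pow_right z).coprime_dvd_right hnc).symm
  have hnD : Nat.Coprime n D := by
    rw [hD, pow_succ' n, mul_assoc, Nat.coprime_mul_left_add_right]
    exact hnb.pow_right _
  obtain ⟨r, hr⟩ := exists_eq_pow_of_mul_eq_pow (Nat.isUnit_iff.2 (hnD.pow_left (i + 1))) he'
  obtain ⟨s, hs⟩ := exists_eq_pow_of_mul_eq_pow
    (Nat.isUnit_iff.2 (hnD.pow_left (i + 1)).symm) ((mul_comm _ _).trans he')
  have hrs : r * s = c := by
    rw [hr, hs, ← mul_pow] at he'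
    exact Nat.pow_left_injective (by omega : z ≠ 0) he'
  have hr2 : 2 ≤ r := by
    by_contra hlt
    have : r ^ z ≤ 1 := Nat.pow_le_one_iff (by omega) |>.2 (by omega)
    have : 1 < n ^ (i + 1) := Nat.one_lt_pow (by omega) hn
    omega
  have hsb : b < s := by
    refine lt_of_pow_lt_pow_left₀ z (Nat.zero_le _) ?_
    rw [← hs, hD]
    have h1 : b ^ z ≤ b ^ (z + (i + 1)) := Nat.pow_le_pow_right (by omega) (by omega)
    have h2 : 0 < n ^ (j + 1) * a ^ (z + (i + 1) + (j + 1)) := by positivity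
    omega
  have hsa : a < s := by
    refine lt_of_pow_lt_pow_left₀ z (Nat.zero_le _) ?_
    rw [← hs, hD]
    have h1 : a ^ z ≤ a ^ (z + (i + 1) + (j + 1)) := Nat.pow_le_pow_right (by omega) (by omega)
    have h2 : a ^ (z + (i + 1) + (j + 1)) ≤ n ^ (j + 1) * a ^ (z + (i + 1) + (j + 1)) :=
      Nat.le_mul_of_pos_left _ (by positivity)
    have h3 : 0 < b ^ (z + (i + 1)) := by positivity
    omega
  have : 2 * s ≤ c := hrs ▸ Nat.mul_le_mul_right s hr2
  nlinarith

/-- The valuation, at a prime `p ∣ b`, of `c ^ (2k) - a ^ (2k)`, where `c ^ 2 - a ^ 2 = b ^ 2`: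
lifting the exponent applies to every such `p`, including `p = 2`. -/
theorem padicValNat_sub {a b c k p : ℕ} (ha : 0 < a) (hb : 0 < b) (h : a ^ 2 + b ^ 2 = c ^ 2)
    (hcop : Nat.Coprime b c) (hk : 0 < k) (hp : p.Prime) (hpb : p ∣ b) :
    padicValNat p (c ^ (2 * k) - a ^ (2 * k)) = 2 * padicValNat p b + padicValNat p k := by
  have : Fact p.Prime := ⟨hp⟩
  have hac : a < c := by nlinarith
  have hpc : ¬ p ∣ c := fun hc => hp.one_lt.ne' (Nat.eq_one_of_dvd_coprimes hcop hpb hc)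
  have hb2 : c ^ 2 - a ^ 2 = b ^ 2 := by omega
  rcases hp.eq_two_or_odd' with rfl | hodd
  · have hbe : 2 ∣ c - a := by
      have h1 : 2 ∣ (c + a) * (c - a) := by
        rw [← Nat.sq_sub_sq, hb2]; exact dvd_pow hpb two_ne_zero
      rcases hp.dvd_mul.1 h1 with h1 | h1 <;> omega
    have h2 := padicValNat.pow_two_sub_pow hac hbe hpc (n := 2 * k) (by omega) (even_two_mul k)
    have h3 : padicValNat 2 (c + a) + padicValNat 2 (c - a) = 2 * padicValNat 2 b := by
      rw [← padicValNat.mul (by omega) (by omega), ← Nat.sq_sub_sq, hb2, padicValNat.pow]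
    rw [padicValNat.mul two_ne_zero hk.ne', padicValNat.self (by norm_num)] at h2
    omega
  · have h2 := padicValNat.pow_sub_pow (p := p) hodd (x := c ^ 2) (y := a ^ 2)
      (Nat.pow_lt_pow_left hac two_ne_zero) (by rw [hb2]; exact dvd_pow hpb two_ne_zero)
      (fun hd => hpc (hp.dvd_of_dvd_pow hd)) hk.ne'
    rw [pow_mul, pow_mul, h2, hb2, padicValNat.pow]

/-- For an even exponent `2k < y`, divisibility of `c ^ (2k) - a ^ (2k)` by `b ^ y` would force
`b ^ (y - 2) ∣ k`, which is too large. -/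
theorem not_pow_dvd_sub {a b c k y : ℕ} (ha : 0 < a) (hb : 2 ≤ b) (h : a ^ 2 + b ^ 2 = c ^ 2)
    (hcop : Nat.Coprime b c) (hk : 0 < k) (hky : 2 * k < y)
    (hd : b ^ y ∣ c ^ (2 * k) - a ^ (2 * k)) : False := by
  have hac : a < c := by nlinarith
  obtain ⟨t, rfl⟩ : ∃ t, y = t + 2 := ⟨y - 2, by omega⟩
  have hne : c ^ (2 * k) - a ^ (2 * k) ≠ 0 := by
    have := Nat.pow_lt_pow_left hac (n := 2 * k) (by omega)
    omega
  have hdk : b ^ t ∣ k := by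
    rw [← Nat.factorization_prime_le_iff_dvd (by positivity) hk.ne']
    intro p hp
    have : Fact p.Prime := ⟨hp⟩
    rw [Nat.factorization_def _ hp, Nat.factorization_def _ hp, padicValNat.pow]
    by_cases hpb : p ∣ b
    · have h1 := (padicValNat_dvd_iff_le (p := p) hne).1 (pow_padicValNat_dvd.trans hd)
      rw [padicValNat_sub ha (by omega) h hcop hk hp hpb, padicValNat.pow] at h1
      nlinarith
    · simp [padicValNat.eq_zero_of_not_dvd hpb]
  have h1 := Nat.le_of_dvd hk hdk
  have h2 : t < b ^ t := Nat.lt_pow_self (by omega)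
  omega

/-- Exclusion of `x = z < y`, given `c + a = e * d ^ 2` with `e = 2` or `d` odd. An even
`x` is handled by valuations; for odd `x` the number `e * d ^ 2` divides both `c ^ x + a ^ x` and
`c ^ x - a ^ x`, hence `2 * c ^ x`, which forces `d = 1` because `d` is coprime to `c`. -/
theorem not_eq_lt {a b c d e n x y : ℕ} (ha : 2 ≤ a) (hb : 2 ≤ b) (h : a ^ 2 + b ^ 2 = c ^ 2)
    (hcop : Nat.Coprime b c) (hn : 1 < n) (hx : 0 < x) (hxy : x < y)
    (hca : c + a = e * d ^ 2) (hdvd : e * d ^ 2 ∣ b ^ 2) (hd1 : 1 < d) (hde : e = 2 ∨ Odd d)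
    (he : (a * n) ^ x + (b * n) ^ y = (c * n) ^ x) : False := by
  have hac : a < c := by nlinarith
  have hle : a ^ x ≤ c ^ x := Nat.pow_le_pow_left hac.le x
  obtain ⟨j, rfl⟩ : ∃ j, y = x + j := ⟨y - x, by omega⟩
  have he' : a ^ x + n ^ j * b ^ (x + j) = c ^ x := by
    have hpos : 0 < n ^ x := by positivity
    apply Nat.eq_of_mul_eq_mul_left hpos
    calc _ = _ := by ring
      _ = _ := he
      _ = _ := by ring
  have hbd : b ^ (x + j) ∣ c ^ x - a ^ x := Dvd.intro_left (n ^ j) (by omega)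
  rcases Nat.even_or_odd' x with ⟨k, rfl | hodd⟩
  · exact not_pow_dvd_sub (by omega) hb h hcop (by omega) hxy hbd
  · have h1 : e * d ^ 2 ∣ c ^ x + a ^ x := hca ▸ Odd.nat_add_dvd_pow_add_pow c a ⟨k, hodd⟩
    have h2 : e * d ^ 2 ∣ c ^ x - a ^ x :=
      hdvd.trans ((pow_dvd_pow b (by omega)).trans hbd)
    have h3 : e * d ^ 2 ∣ 2 * c ^ x := by
      have := dvd_add h1 h2
      rwa [show c ^ x + a ^ x + (c ^ x - a ^ x) = 2 * c ^ x by omega] at this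
    have hdc : Nat.Coprime (d ^ 2) (c ^ x) :=
      ((hcop.pow_left 2).coprime_dvd_left ((Dvd.intro_left e rfl).trans hdvd)).pow_right x
    have h4 : d ^ 2 ∣ 1 := by
      rcases hde with rfl | hde
      · have : d ^ 2 ∣ c ^ x := Nat.dvd_of_mul_dvd_mul_left two_pos h3
        exact (Nat.eq_one_of_dvd_coprimes hdc dvd_rfl this).dvd
      · have hd2 : d ^ 2 ∣ 2 := hdc.dvd_of_dvd_mul_right ((Dvd.intro_left e rfl).trans h3)
        exact (Nat.eq_one_of_dvd_coprimes
          ((Nat.coprime_two_right.2 hde).pow_left 2) dvd_rfl hd2).dvd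
    have := Nat.le_of_dvd one_pos h4
    nlinarith

/-- Exclusion of `x = y > z`. Every prime dividing `a ^ x + b ^ x` divides `c`; this forces
`x = 2k` with `k` odd, and then lifting the exponent gives `a ^ x + b ^ x ∣ c ^ 2 * k`, which is
too small unless `k = 1`. -/
theorem not_eq_gt {a b c n x z : ℕ} (ha : 2 ≤ a) (hb : 2 ≤ b) (h : a ^ 2 + b ^ 2 = c ^ 2)
    (hcop : Nat.Coprime a c) (hc : Odd c) (hn : 1 < n) (hz : 0 < z) (hzx : z < x)
    (he : (a * n) ^ x + (b * n) ^ x = (c * n) ^ z) : False := by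
  obtain ⟨j, rfl⟩ : ∃ j, x = z + j := ⟨x - z, by omega⟩
  have he' : n ^ j * (a ^ (z + j) + b ^ (z + j)) = c ^ z := by
    have hpos : 0 < n ^ z := by positivity
    apply Nat.eq_of_mul_eq_mul_left hpos
    calc _ = _ := by ring
      _ = _ := he
      _ = _ := by ring
  have hjx : 2 ≤ z + j := by omega
  generalize hxdef : z + j = x at *
  have hDc : a ^ x + b ^ x ∣ c ^ z := Dvd.intro_left _ he'
  have hpc : ∀ p : ℕ, p.Prime → p ∣ a ^ x + b ^ x → p ∣ c := fun p hp hpd =>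
    hp.dvd_of_dvd_pow (hpd.trans hDc)
  have hapos : 0 < a ^ x := by positivity
  have hbpos : 0 < b ^ x := by positivity
  -- A prime `p` of `a ^ x + b ^ x` divides neither `2` nor `a`.
  have key : ∀ p : ℕ, p.Prime → p ∣ a ^ x + b ^ x → ∀ m, ¬ (p : ℤ) ∣ 2 * (a : ℤ) ^ m := by
    intro p hp hpd m hm
    have h1 : p ∣ 2 * a ^ m := by exact_mod_cast hm
    have hpc' := hpc p hp hpd
    rcases hp.dvd_mul.1 h1 with h2 | h2
    · have : p = 2 := (Nat.prime_dvd_prime_iff_eq hp Nat.prime_two).1 h2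
      subst this
      rcases hc with ⟨q, hq⟩
      omega
    · exact hp.one_lt.ne' (Nat.eq_one_of_dvd_coprimes hcop (hp.dvd_of_dvd_pow h2) hpc')
  have hprime : ∃ p : ℕ, p.Prime ∧ p ∣ a ^ x + b ^ x := Nat.exists_prime_and_dvd (by omega)
  obtain ⟨p, hp, hpd⟩ := hprime
  have hpZ : (p : ℤ) ∣ (a : ℤ) ^ x + (b : ℤ) ^ x := by exact_mod_cast hpd
  have hpC : (p : ℤ) ∣ (a : ℤ) ^ 2 + (b : ℤ) ^ 2 := by
    have : p ∣ a ^ 2 + b ^ 2 := h ▸ dvd_pow (hpc p hp hpd) two_ne_zero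
    exact_mod_cast this
  rcases Nat.even_or_odd' x with ⟨k, rfl | hodd⟩
  · rcases Nat.even_or_odd k with hk | hk
    · have h1 : (p : ℤ) ∣ ((a : ℤ) ^ 2) ^ k - ((b : ℤ) ^ 2) ^ k := by
        have := sub_dvd_pow_sub_pow ((a : ℤ) ^ 2) (-(b : ℤ) ^ 2) k
        rw [hk.neg_pow, sub_neg_eq_add] at this
        exact hpC.trans this
      apply key p hp hpd (2 * k)
      have := dvd_add hpZ h1
      rwa [show (a : ℤ) ^ (2 * k) + (b : ℤ) ^ (2 * k) + (((a : ℤ) ^ 2) ^ k - ((b : ℤ) ^ 2) ^ k)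
        = 2 * (a : ℤ) ^ (2 * k) by ring] at this
    · have hcpos : 0 < c := hc.pos
      have hdk : a ^ (2 * k) + b ^ (2 * k) ∣ c ^ 2 * k := by
        rw [← Nat.factorization_prime_le_iff_dvd (by positivity)
          (by have := hk.pos; positivity)]
        intro q hq
        have : Fact q.Prime := ⟨hq⟩
        rw [Nat.factorization_def _ hq, Nat.factorization_def _ hq]
        by_cases hqd : q ∣ a ^ (2 * k) + b ^ (2 * k)
        · have hqc := hpc q hq hqd
          have hqo : Odd q := hc.of_dvd_nat hqc
          have hqa : ¬ q ∣ a ^ 2 := fun hd => hq.one_lt.ne'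
            (Nat.eq_one_of_dvd_coprimes hcop (hq.dvd_of_dvd_pow hd) hqc)
          have h1 := padicValNat.pow_add_pow (p := q) hqo (x := a ^ 2) (y := b ^ 2)
            (h ▸ dvd_pow hqc two_ne_zero) hqa hk
          rw [pow_mul, pow_mul, h1, h, padicValNat.mul (by positivity) hk.pos.ne']
        · simp [padicValNat.eq_zero_of_not_dvd hqd]
      rcases Nat.lt_or_ge k 2 with hk2 | hk2
      · have hk1 : k = 1 := by omega
        subst hk1
        have hz1 : z = 1 := by omega
        subst hz1
        have hle := Nat.le_of_dvd (by positivity) hDc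
        simp only [mul_one, pow_one] at hle
        nlinarith
      · have hle := Nat.le_of_dvd (by have := hk.pos; positivity) hdk
        obtain ⟨t, rfl⟩ : ∃ t, k = t + 1 := ⟨k - 1, by omega⟩
        have hlt : ∀ w : ℕ, 2 ≤ w → (t + 1) * w ^ 2 < w ^ (2 * (t + 1)) := by
          intro w hw
          have h1 : 2 * t < w ^ (2 * t) := Nat.lt_pow_self (by omega)
          calc (t + 1) * w ^ 2 < w ^ (2 * t) * w ^ 2 :=
                Nat.mul_lt_mul_of_pos_right (by omega) (by positivity)
            _ = _ := by ring
        have h2 := hlt a ha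
        have h3 := hlt b hb
        rw [← h] at hle
        nlinarith
  · have h1 : (p : ℤ) ∣ ((a : ℤ) ^ 2) ^ x + ((b : ℤ) ^ 2) ^ x :=
      hpC.trans (Odd.add_dvd_pow_add_pow _ _ ⟨k, hodd⟩)
    apply key p hp hpd (2 * x)
    have := dvd_add h1 (hpZ.mul_right ((a : ℤ) ^ x - (b : ℤ) ^ x))
    rwa [show ((a : ℤ) ^ 2) ^ x + ((b : ℤ) ^ 2) ^ x
        + ((a : ℤ) ^ x + (b : ℤ) ^ x) * ((a : ℤ) ^ x - (b : ℤ) ^ x)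
      = 2 * (a : ℤ) ^ (2 * x) by ring] at this

/-- In the surviving order `x > z > y`, comparing powers of `n` gives `n ∣ b ^ y`. -/
theorem dvd_pow_of_lt_lt {a b c n x y z : ℕ} (hn : 1 < n) (hyz : y < z) (hzx : z < x)
    (he : (a * n) ^ x + (b * n) ^ y = (c * n) ^ z) : n ∣ b ^ y := by
  have h1 : n ^ (y + 1) ∣ (a * n) ^ x :=
    (pow_dvd_pow n (by omega)).trans (pow_dvd_pow_of_dvd (Dvd.intro_left a rfl) x)
  have h2 : n ^ (y + 1) ∣ (c * n) ^ z :=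
    (pow_dvd_pow n (by omega)).trans (pow_dvd_pow_of_dvd (Dvd.intro_left c rfl) z)
  have h3 : n ^ (y + 1) ∣ (b * n) ^ y := (Nat.dvd_add_right h1).1 (he ▸ h2)
  rw [pow_succ, mul_pow, mul_comm (b ^ y)] at h3
  exact Nat.dvd_of_mul_dvd_mul_left (by positivity) h3

theorem stmt_14 (f g n : ℕ) (hg : 0 < g) (hfg : g < f) (hcop : Nat.Coprime f g)
    (heven : 2 ∣ f * g) (hn : 1 < n)
    (x y z : ℕ) (hx : 0 < x) (hy : 0 < y) (hz : 0 < z)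
    (heq : ((f ^ 2 - g ^ 2) * n) ^ x + (2 * f * g * n) ^ y = ((f ^ 2 + g ^ 2) * n) ^ z)
    (hne : (x, y, z) ≠ (2, 2, 2)) :
    (x > z ∧ z > y ∧ P n ∣ 2 * f * g) ∨ (y > z ∧ z > x ∧ P n ∣ f ^ 2 - g ^ 2) := by
  have hsq : g ^ 2 < f ^ 2 := Nat.pow_lt_pow_left hfg two_ne_zero
  obtain ⟨A, hA⟩ : ∃ A, A = f ^ 2 - g ^ 2 := ⟨_, rfl⟩
  obtain ⟨B, hB⟩ : ∃ B, B = 2 * f * g := ⟨_, rfl⟩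
  obtain ⟨C, hC⟩ : ∃ C, C = f ^ 2 + g ^ 2 := ⟨_, rfl⟩
  have hAf : A + g ^ 2 = f ^ 2 := by omega
  rw [← hA, ← hB, ← hC] at heq
  rw [← hA, ← hB]
  have hA2 : 2 ≤ A := by nlinarith
  have hB2 : 2 ≤ B := by nlinarith
  have hpyth : A ^ 2 + B ^ 2 = C ^ 2 := by
    rw [hB, hC, ← hAf]
    nlinarith
  have hodd : Odd (f + g) := by
    have : ¬ (2 ∣ f ∧ 2 ∣ g) := fun hh =>
      absurd (Nat.eq_one_of_dvd_coprimes hcop hh.1 hh.2) (by norm_num)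
    rcases Nat.prime_two.dvd_mul.1 heven with h | h <;> rw [Nat.odd_iff] <;> omega
  have hCodd : Odd C := by
    rw [hC]
    simpa [Nat.odd_add, Nat.even_pow, Nat.odd_pow_iff] using hodd
  have hCB : Nat.Coprime B C := by
    rw [hB, hC]
    refine Nat.Coprime.mul_left (Nat.Coprime.mul_left ?_ ?_) ?_
    · exact Nat.coprime_two_left.2 (hC ▸ hCodd)
    · rw [sq f, Nat.coprime_mul_right_add_right]
      exact hcop.pow_right 2
    · rw [sq g, Nat.coprime_add_mul_right_right]
      exact hcop.symm.pow_right 2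
  have hCA : Nat.Coprime A C := by
    have h1 : Nat.Coprime (A ^ 2) (C ^ 2) := by
      rw [← hpyth, Nat.coprime_self_add_right]
      have h2 : Nat.Coprime (A ^ 2 + B ^ 2) (B ^ 2) := hpyth ▸ (hCB.symm.pow 2 2)
      exact Nat.coprime_add_self_left.1 h2
    exact (Nat.coprime_pow_left_iff two_pos _ _).1 ((Nat.coprime_pow_right_iff two_pos _ _).1 h1)
  have hpyth' : B ^ 2 + A ^ 2 = C ^ 2 := by omega
  have heq' : (B * n) ^ y + (A * n) ^ x = (C * n) ^ z := by omega
  by_cases hbig : x ≤ z ∧ y ≤ z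
  · have := eq_two_of_le (a := A * n) (b := B * n) (c := C * n) (by nlinarith) (by nlinarith)
      (by linear_combination n ^ 2 * hpyth) hx hy hbig.1 hbig.2 heq
    simp_all
  rcases lt_trichotomy x y with hxy | rfl | hxy
  · rcases lt_trichotomy x z with hxz | rfl | hxz
    · exact Or.inr ⟨by omega, hxz,
        P_dvd_of_dvd_pow (by omega) (dvd_pow_of_lt_lt hn hxz (by omega) heq')⟩
    · have hCA2 : C + A = 2 * f ^ 2 := by omega
      exact (not_eq_lt (d := f) (e := 2) hA2 hB2 hpyth hCB hn hx hxy hCA2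
        ⟨2 * g ^ 2, by rw [hB]; ring⟩ (by omega) (Or.inl rfl) heq).elim
    · exact (not_lt_lt hB2 hA2 hpyth' hCA hn hz hxz hxy heq').elim
  · exact (not_eq_gt hA2 hB2 hpyth hCA hCodd hn hz (by omega) heq).elim
  · rcases lt_trichotomy y z with hyz | rfl | hyz
    · exact Or.inl ⟨by omega, hyz,
        P_dvd_of_dvd_pow (by omega) (dvd_pow_of_lt_lt hn hyz (by omega) heq)⟩
    · have hCB2 : C + B = 1 * (f + g) ^ 2 := by rw [hB, hC]; ring
      have hfac : A = (f + g) * (f - g) := by rw [hA, Nat.sq_sub_sq]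
      exact (not_eq_lt (d := f + g) (e := 1) hB2 hA2 hpyth' hCA hn hy hxy
        hCB2 ⟨(f - g) ^ 2, by rw [hfac]; ring⟩ (by omega)
        (Or.inr hodd) heq').elim
    · exact (not_lt_lt hA2 hB2 hpyth hCB hn hz hyz hxy heq).elim
end
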